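/- arXiv:2605.02097 — 3 statements merged into one kernel-verified Lean document; each statement's English description precedes it below -/
import Mathlib

section
/- Let ρ be a three-qubit density matrix (positive semidefinite 8×8 complex matrix with trace 1, the Hilbert space being ℂ²⊗ℂ²⊗ℂ²), and let E_{φ_ABC}(ρ) be the convex-roof extension of φ_ABC. Then E_{φ_ABC}(ρ) = 0 if and only if ρ is fully separable. -/
open scoped BigOperators Kronecker ComplexOrder
open Matrix

noncomputable section

abbrev Q3 : Type := Fin 2 × Fin 2 × Fin 2

/-- Two-party reduced density matrix `ρ_AB` of a three-qubit pure state. -/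
def rhoAB (Ψ : Q3 → ℂ) : Matrix (Fin 2 × Fin 2) (Fin 2 × Fin 2) ℂ :=
  fun p q => ∑ c : Fin 2, Ψ (p.1, p.2, c) * (starRingEnd ℂ) (Ψ (q.1, q.2, c))

/-- Single-party reduced density matrix `ρ_A`. -/
def rhoA (Ψ : Q3 → ℂ) : Matrix (Fin 2) (Fin 2) ℂ :=
  fun a a' => ∑ b : Fin 2, ∑ c : Fin 2, Ψ (a, b, c) * (starRingEnd ℂ) (Ψ (a', b, c))

/-- Single-party reduced density matrix `ρ_B`. -/
def rhoB (Ψ : Q3 → ℂ) : Matrix (Fin 2) (Fin 2) ℂ :=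
  fun b b' => ∑ a : Fin 2, ∑ c : Fin 2, Ψ (a, b, c) * (starRingEnd ℂ) (Ψ (a, b', c))

/-- The entanglement measure `φ_ABC` of a three-qubit pure state. -/
def phiABC (Ψ : Q3 → ℂ) : ℝ :=
  69 - ((((2 : ℂ) • rhoAB Ψ + rhoA Ψ ⊗ₖ (1 : Matrix (Fin 2) (Fin 2) ℂ)
          + (1 : Matrix (Fin 2) (Fin 2) ℂ) ⊗ₖ rhoB Ψ) ^ 3).trace).re
    - 3 * (((rhoAB Ψ) ^ 2).trace).re

/-- Convex-roof extension of a real-valued function on three-qubit pure states. -/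
def convexRoof (f : (Q3 → ℂ) → ℝ) (ρ : Matrix Q3 Q3 ℂ) : ℝ :=
  sInf {x : ℝ | ∃ (m : ℕ) (p : Fin m → ℝ) (ψ : Fin m → Q3 → ℂ),
    (∀ ℓ, 0 < p ℓ) ∧ (∑ ℓ, p ℓ = 1) ∧ (∀ ℓ, ∑ v : Q3, ‖ψ ℓ v‖ ^ 2 = 1) ∧
    ρ = ∑ ℓ, (p ℓ : ℂ) • Matrix.vecMulVec (ψ ℓ) (star (ψ ℓ)) ∧
    x = ∑ ℓ, p ℓ * f (ψ ℓ)}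

/-- Full separability of a three-qubit density matrix. -/
def FullySep3 (ρ : Matrix Q3 Q3 ℂ) : Prop :=
  ∃ (m : ℕ) (p : Fin m → ℝ)
    (f : Fin m → Fin 2 → ℂ) (g : Fin m → Fin 2 → ℂ) (h : Fin m → Fin 2 → ℂ),
    (∀ j, 0 ≤ p j) ∧ (∑ j, p j = 1) ∧
    (∀ j, ∑ v : Q3, ‖f j v.1 * g j v.2.1 * h j v.2.2‖ ^ 2 = 1) ∧
    ρ = ∑ j, (p j : ℂ) •
      Matrix.vecMulVec (fun v : Q3 => f j v.1 * g j v.2.1 * h j v.2.2)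
        (star fun v : Q3 => f j v.1 * g j v.2.1 * h j v.2.2)

theorem isCompact_convexHull_aux {E : Type} [AddCommGroup E] [Module ℝ E] [TopologicalSpace E]
    [ContinuousAdd E] [ContinuousSMul ℝ E] [FiniteDimensional ℝ E] {s : Set E}
    (hs : IsCompact s) : IsCompact (convexHull ℝ s) := by
  rcases s.eq_empty_or_nonempty with rfl | ⟨s0, hs0⟩
  · simp
  set N := Module.finrank ℝ E + 1 with hN
  have h1 : IsCompact ((stdSimplex ℝ (Fin N)) ×ˢ (Set.pi Set.univ fun _ : Fin N => s)) :=
    (isCompact_stdSimplex ℝ (Fin N)).prod (isCompact_univ_pi fun _ => hs)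
  have h2 : Continuous (fun q : (Fin N → ℝ) × (Fin N → E) => ∑ i, q.1 i • q.2 i) := by fun_prop
  have h3 := h1.image h2
  convert h3 using 1
  ext x
  constructor
  · intro hx
    obtain ⟨ι, _, z, w, hz, hai, hw, hw1, hx⟩ := eq_pos_convex_span_of_mem_convexHull hx
    have hc : Fintype.card ι ≤ Fintype.card (Fin N) := by
      have h4 := hai.card_le_finrank_succ
      have h5 := Submodule.finrank_le (vectorSpan ℝ (Set.range z))
      simp only [Fintype.card_fin]
      omega
    obtain ⟨e⟩ := Function.Embedding.nonempty_of_card_le hc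
    have hei := e.injective
    refine ⟨(Function.extend e w 0, Function.extend e z (fun _ => s0)), ⟨⟨?_, ?_⟩, ?_⟩, ?_⟩
    · intro j
      by_cases hj : ∃ i, e i = j
      · obtain ⟨i, rfl⟩ := hj
        simp only [hei.extend_apply]; exact (hw i).le
      · simp [Function.extend_apply' _ _ _ hj]
    · simp only
      rw [← hw1]
      symm
      apply Fintype.sum_of_injective e hei
      · intro j hj
        have : ¬ ∃ i, e i = j := fun ⟨i, hi⟩ => hj ⟨i, hi⟩
        simp [Function.extend_apply' _ _ _ this]
      · intro i; simp [hei.extend_apply]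
    · intro j _
      by_cases hj : ∃ i, e i = j
      · obtain ⟨i, rfl⟩ := hj
        simp only [hei.extend_apply]; exact hz ⟨i, rfl⟩
      · simpa [Function.extend_apply' _ _ _ hj] using hs0
    · simp only
      rw [← hx]
      symm
      apply Fintype.sum_of_injective e hei
      · intro j hj
        have : ¬ ∃ i, e i = j := fun ⟨i, hi⟩ => hj ⟨i, hi⟩
        simp [Function.extend_apply' _ _ _ this]
      · intro i; simp [hei.extend_apply]
  · rintro ⟨⟨w, z⟩, ⟨⟨hw, hw1⟩, hz⟩, rfl⟩
    exact (convex_convexHull ℝ s).sum_mem (fun i _ => hw i) hw1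
      (fun i _ => subset_convexHull ℝ s (hz i trivial))

theorem psd_le_one {n : Type} [Fintype n] [DecidableEq n] {M : Matrix n n ℂ} (hM : M.PosSemidef)
    (ht : M.trace = 1) : (1 - M).PosSemidef := by
  have hs := hM.1.spectral_theorem
  set U := hM.1.eigenvectorUnitary
  have hsum : ∑ i, hM.1.eigenvalues i = 1 := by
    have := hM.1.trace_eq_sum_eigenvalues
    rw [ht] at this
    apply Complex.ofReal_injective
    rw [Complex.ofReal_sum, Complex.ofReal_one]
    exact this.symm
  have hle : ∀ i, hM.1.eigenvalues i ≤ 1 := fun i => by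
    rw [← hsum]
    exact Finset.single_le_sum (fun j _ => hM.eigenvalues_nonneg j) (Finset.mem_univ i)
  have h1 : 1 - M = Unitary.conjStarAlgAut ℂ _ U
      (diagonal (fun i => ((1 - hM.1.eigenvalues i : ℝ) : ℂ))) := by
    conv_lhs => rw [hs, ← map_one (Unitary.conjStarAlgAut ℂ _ U), ← map_sub]
    congr 1
    rw [← diagonal_one, diagonal_sub]
    congr 1
    ext i
    simp
  rw [h1, Unitary.conjStarAlgAut_apply]
  have : (diagonal (fun i => ((1 - hM.1.eigenvalues i : ℝ) : ℂ))).PosSemidef := by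
    apply PosSemidef.diagonal
    intro i
    exact Complex.zero_le_real.2 (sub_nonneg.2 (hle i))
  exact this.mul_mul_conjTranspose_same _

open scoped MatrixOrder Matrix.Norms.L2Operator in
theorem tr_mul_nonneg {n : Type} [Fintype n] [DecidableEq n] {P Q : Matrix n n ℂ}
    (hP : P.PosSemidef) (hQ : Q.PosSemidef) : 0 ≤ ((P * Q).trace).re := by
  obtain ⟨B, rfl⟩ := CStarAlgebra.nonneg_iff_eq_star_mul_self.mp hP.nonneg
  rw [star_eq_conjTranspose]
  have := (hQ.mul_mul_conjTranspose_same B).trace_nonneg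
  rw [Matrix.trace_mul_comm, ← Matrix.mul_assoc] at this
  exact (Complex.le_def.1 this).1

theorem tr_cube {n : Type} [Fintype n] [DecidableEq n] (X Y : Matrix n n ℂ) :
    ((X + Y) ^ 3).trace = (X ^ 3).trace + 3 * (X ^ 2 * Y).trace + 3 * (X * Y ^ 2).trace
      + (Y ^ 3).trace := by
  have h : (X + Y) ^ 3 = X ^ 3 + X ^ 2 * Y + X * (Y * X) + Y * X ^ 2 + X * Y ^ 2
      + (Y * X) * Y + Y ^ 2 * X + Y ^ 3 := by noncomm_ring
  rw [h]
  simp only [trace_add]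
  have a1 : (X * (Y * X)).trace = (X ^ 2 * Y).trace := by
    rw [trace_mul_comm, Matrix.mul_assoc, trace_mul_comm, pow_two]
  have a2 : (Y * X ^ 2).trace = (X ^ 2 * Y).trace := trace_mul_comm _ _
  have a3 : ((Y * X) * Y).trace = (X * Y ^ 2).trace := by
    rw [trace_mul_comm, ← Matrix.mul_assoc, trace_mul_comm, pow_two]
  have a4 : (Y ^ 2 * X).trace = (X * Y ^ 2).trace := trace_mul_comm _ _
  rw [a1, a2, a3, a4]
  ring

theorem rhoAB_psd (Ψ : Q3 → ℂ) : (rhoAB Ψ).PosSemidef := by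
  have : rhoAB Ψ = (Matrix.of (fun p c => Ψ (p.1, p.2, c)) : Matrix (Fin 2 × Fin 2) (Fin 2) ℂ) *
      (Matrix.of (fun p c => Ψ (p.1, p.2, c)) : Matrix (Fin 2 × Fin 2) (Fin 2) ℂ)ᴴ := by
    ext p q
    simp [rhoAB, Matrix.mul_apply]
  rw [this]
  exact posSemidef_self_mul_conjTranspose _

theorem rhoA_psd (Ψ : Q3 → ℂ) : (rhoA Ψ).PosSemidef := by
  have : rhoA Ψ = (Matrix.of (fun a c => Ψ (a, c.1, c.2)) : Matrix (Fin 2) (Fin 2 × Fin 2) ℂ) *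
      (Matrix.of (fun a c => Ψ (a, c.1, c.2)) : Matrix (Fin 2) (Fin 2 × Fin 2) ℂ)ᴴ := by
    ext p q
    simp [rhoA, Matrix.mul_apply, Fintype.sum_prod_type]
  rw [this]
  exact posSemidef_self_mul_conjTranspose _

theorem rhoB_psd (Ψ : Q3 → ℂ) : (rhoB Ψ).PosSemidef := by
  have : rhoB Ψ = (Matrix.of (fun b c => Ψ (c.1, b, c.2)) : Matrix (Fin 2) (Fin 2 × Fin 2) ℂ) *
      (Matrix.of (fun b c => Ψ (c.1, b, c.2)) : Matrix (Fin 2) (Fin 2 × Fin 2) ℂ)ᴴ := by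
    ext p q
    simp [rhoB, Matrix.mul_apply, Fintype.sum_prod_type]
  rw [this]
  exact posSemidef_self_mul_conjTranspose _

theorem norm_cond (Ψ : Q3 → ℂ) (h : ∑ v : Q3, ‖Ψ v‖ ^ 2 = 1) :
    ∑ v : Q3, Ψ v * (starRingEnd ℂ) (Ψ v) = 1 := by
  have h2 := congrArg (fun x : ℝ => (x : ℂ)) h
  simp only [Complex.ofReal_sum, Complex.ofReal_one] at h2
  rw [← h2]
  refine Finset.sum_congr rfl fun v _ => ?_
  rw [Complex.mul_conj, Complex.normSq_eq_norm_sq]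

theorem rhoAB_tr (Ψ : Q3 → ℂ) (h : ∑ v : Q3, ‖Ψ v‖ ^ 2 = 1) : (rhoAB Ψ).trace = 1 := by
  rw [← norm_cond Ψ h]
  simp [rhoAB, Matrix.trace, Fintype.sum_prod_type]

theorem rhoA_tr (Ψ : Q3 → ℂ) (h : ∑ v : Q3, ‖Ψ v‖ ^ 2 = 1) : (rhoA Ψ).trace = 1 := by
  rw [← norm_cond Ψ h]
  simp [rhoA, Matrix.trace, Fintype.sum_prod_type]

theorem rhoB_tr (Ψ : Q3 → ℂ) (h : ∑ v : Q3, ‖Ψ v‖ ^ 2 = 1) : (rhoB Ψ).trace = 1 := by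
  rw [← norm_cond Ψ h]
  simp [rhoB, Matrix.trace, Fintype.sum_prod_type]
  ring

theorem tr_AB_A (Ψ : Q3 → ℂ) (C : Matrix (Fin 2) (Fin 2) ℂ) :
    (rhoAB Ψ * (C ⊗ₖ (1 : Matrix (Fin 2) (Fin 2) ℂ))).trace = (rhoA Ψ * C).trace := by
  simp [rhoAB, rhoA, Matrix.trace, Matrix.mul_apply, Fintype.sum_prod_type, Matrix.one_apply]
  ring

theorem tr_AB_B (Ψ : Q3 → ℂ) (C : Matrix (Fin 2) (Fin 2) ℂ) :
    (rhoAB Ψ * ((1 : Matrix (Fin 2) (Fin 2) ℂ) ⊗ₖ C)).trace = (rhoB Ψ * C).trace := by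
  simp [rhoAB, rhoB, Matrix.trace, Matrix.mul_apply, Fintype.sum_prod_type, Matrix.one_apply]
  ring

theorem phi_expand (Ψ : Q3 → ℂ) (h : ∑ v : Q3, ‖Ψ v‖ ^ 2 = 1) :
    phiABC Ψ = 69 - (8 * ((rhoAB Ψ ^ 3).trace).re
      + 12 * ((rhoAB Ψ ^ 2 * (rhoA Ψ ⊗ₖ (1 : Matrix (Fin 2) (Fin 2) ℂ))).trace).re
      + 12 * ((rhoAB Ψ ^ 2 * ((1 : Matrix (Fin 2) (Fin 2) ℂ) ⊗ₖ rhoB Ψ)).trace).re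
      + 12 * ((rhoAB Ψ * (rhoA Ψ ⊗ₖ rhoB Ψ)).trace).re
      + 8 * ((rhoA Ψ ^ 3).trace).re + 8 * ((rhoB Ψ ^ 3).trace).re
      + 3 * ((rhoA Ψ ^ 2).trace).re + 3 * ((rhoB Ψ ^ 2).trace).re)
      - 3 * ((rhoAB Ψ ^ 2).trace).re := by
  have hA := rhoA_tr Ψ h
  have hB := rhoB_tr Ψ h
  have h1 := tr_AB_A Ψ (rhoA Ψ ^ 2)
  have h2 := tr_AB_B Ψ (rhoB Ψ ^ 2)
  unfold phiABC
  generalize rhoAB Ψ = M at *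
  generalize rhoA Ψ = A at *
  generalize rhoB Ψ = B at *
  rw [add_assoc, tr_cube, tr_cube]
  have hPQ : (A ⊗ₖ (1 : Matrix (Fin 2) (Fin 2) ℂ) + (1 : Matrix (Fin 2) (Fin 2) ℂ) ⊗ₖ B) ^ 2
      = (A ^ 2) ⊗ₖ (1 : Matrix (Fin 2) (Fin 2) ℂ) + (2 : ℂ) • (A ⊗ₖ B)
        + (1 : Matrix (Fin 2) (Fin 2) ℂ) ⊗ₖ (B ^ 2) := by
    rw [pow_two, pow_two, pow_two, add_mul, mul_add, mul_add]
    simp only [← mul_kronecker_mul, Matrix.mul_one, Matrix.one_mul, two_smul]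
    abel
  rw [hPQ]
  have e1 : (A ⊗ₖ (1 : Matrix (Fin 2) (Fin 2) ℂ)) ^ 2 = (A ^ 2) ⊗ₖ 1 := by
    simp only [pow_two, ← mul_kronecker_mul, Matrix.mul_one]
  have e2 : (A ⊗ₖ (1 : Matrix (Fin 2) (Fin 2) ℂ)) ^ 3 = (A ^ 3) ⊗ₖ 1 := by
    simp only [pow_succ, pow_zero, Matrix.one_mul, ← mul_kronecker_mul, Matrix.mul_one]
  have e3 : ((1 : Matrix (Fin 2) (Fin 2) ℂ) ⊗ₖ B) ^ 2 = 1 ⊗ₖ (B ^ 2) := by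
    simp only [pow_two, ← mul_kronecker_mul, Matrix.mul_one]
  have e4 : ((1 : Matrix (Fin 2) (Fin 2) ℂ) ⊗ₖ B) ^ 3 = 1 ⊗ₖ (B ^ 3) := by
    simp only [pow_succ, pow_zero, Matrix.one_mul, ← mul_kronecker_mul, Matrix.mul_one]
  rw [e1, e2, e3, e4]
  simp only [smul_pow, Matrix.smul_mul, Matrix.mul_smul, Matrix.mul_add, trace_add, trace_smul,
    h1, h2, ← mul_kronecker_mul, Matrix.mul_one, Matrix.one_mul, trace_kronecker, hA, hB,
    trace_one, ← pow_succ', Fintype.card_fin]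
  norm_num
  ring

theorem tr_sq_le {n : Type} [Fintype n] [DecidableEq n] {M : Matrix n n ℂ} (hM : M.PosSemidef)
    (ht : M.trace = 1) : ((M ^ 2).trace).re ≤ 1 := by
  have := tr_mul_nonneg hM (psd_le_one hM ht)
  rw [Matrix.mul_sub, Matrix.mul_one, trace_sub, ht, ← pow_two] at this
  simpa using this

theorem sq_psd {n : Type} [Fintype n] [DecidableEq n] {M : Matrix n n ℂ} (hM : M.PosSemidef) :
    (M ^ 2).PosSemidef := hM.pow 2

theorem tr_cu_le {n : Type} [Fintype n] [DecidableEq n] {M : Matrix n n ℂ} (hM : M.PosSemidef)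
    (ht : M.trace = 1) : ((M ^ 3).trace).re ≤ 1 := by
  have := tr_mul_nonneg (sq_psd hM) (psd_le_one hM ht)
  rw [Matrix.mul_sub, Matrix.mul_one, trace_sub, ← pow_succ] at this
  have h2 := tr_sq_le hM ht
  simp at this
  linarith

theorem phi_ge (Ψ : Q3 → ℂ) (h : ∑ v : Q3, ‖Ψ v‖ ^ 2 = 1) :
    3 * (1 - ((rhoA Ψ ^ 2).trace).re) + 3 * (1 - ((rhoB Ψ ^ 2).trace).re) ≤ phiABC Ψ := by
  rw [phi_expand Ψ h]
  have pM := rhoAB_psd Ψ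
  have pA := rhoA_psd Ψ
  have pB := rhoB_psd Ψ
  have tM := rhoAB_tr Ψ h
  have tA := rhoA_tr Ψ h
  have tB := rhoB_tr Ψ h
  have m2 := tr_sq_le pM tM
  have m3 := tr_cu_le pM tM
  have a3 := tr_cu_le pA tA
  have b3 := tr_cu_le pB tB
  have pone : (1 : Matrix (Fin 2) (Fin 2) ℂ).PosSemidef := PosSemidef.one
  have x1 := tr_mul_nonneg (sq_psd pM) ((psd_le_one pA tA).kronecker pone)
  have x2 := tr_mul_nonneg (sq_psd pM) (pone.kronecker (psd_le_one pB tB))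
  have x3 := tr_mul_nonneg pM (psd_le_one (pA.kronecker pB) (by rw [trace_kronecker, tA, tB, mul_one]))
  rw [Matrix.mul_sub, Matrix.mul_one, trace_sub, tM, Complex.sub_re, Complex.one_re] at x3
  have d1 : (1 - rhoA Ψ) ⊗ₖ (1 : Matrix (Fin 2) (Fin 2) ℂ) = 1 ⊗ₖ 1 - rhoA Ψ ⊗ₖ 1 := by
    ext i j
    simp only [kroneckerMap_apply, Matrix.sub_apply, sub_mul]
  have d2 : (1 : Matrix (Fin 2) (Fin 2) ℂ) ⊗ₖ (1 - rhoB Ψ) = 1 ⊗ₖ 1 - 1 ⊗ₖ rhoB Ψ := by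
    ext i j
    simp only [kroneckerMap_apply, Matrix.sub_apply, mul_sub]
  rw [d1, one_kronecker_one, Matrix.mul_sub, Matrix.mul_one, trace_sub,
    Complex.sub_re] at x1
  rw [d2, one_kronecker_one, Matrix.mul_sub, Matrix.mul_one, trace_sub,
    Complex.sub_re] at x2
  linarith

theorem trA_id (Ψ : Q3 → ℂ) : (rhoA Ψ).trace ^ 2 = (rhoA Ψ ^ 2).trace
    + ∑ v : Fin 2 × Fin 2, ∑ w : Fin 2 × Fin 2,
      ((‖Ψ (0, v) * Ψ (1, w) - Ψ (1, v) * Ψ (0, w)‖ ^ 2 : ℝ) : ℂ) := by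
  have : ∀ z : ℂ, ((‖z‖ ^ 2 : ℝ) : ℂ) = z * (starRingEnd ℂ) z := fun z => by
    rw [Complex.mul_conj, Complex.normSq_eq_norm_sq]
  simp only [this, map_sub, map_mul]
  simp only [rhoA, Matrix.trace, Matrix.diag, Fintype.sum_prod_type, Fin.sum_univ_two, pow_two,
    Matrix.mul_apply]
  ring

theorem trB_id (Ψ : Q3 → ℂ) : (rhoB Ψ).trace ^ 2 = (rhoB Ψ ^ 2).trace
    + ∑ v : Fin 2 × Fin 2, ∑ w : Fin 2 × Fin 2,
      ((‖Ψ (v.1, 0, v.2) * Ψ (w.1, 1, w.2) - Ψ (v.1, 1, v.2) * Ψ (w.1, 0, w.2)‖ ^ 2 : ℝ) : ℂ) := by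
  have : ∀ z : ℂ, ((‖z‖ ^ 2 : ℝ) : ℂ) = z * (starRingEnd ℂ) z := fun z => by
    rw [Complex.mul_conj, Complex.normSq_eq_norm_sq]
  simp only [this, map_sub, map_mul]
  simp only [rhoB, Matrix.trace, Matrix.diag, Fintype.sum_prod_type, Fin.sum_univ_two, pow_two,
    Matrix.mul_apply]
  ring

theorem sum_sq_zero (F : Fin 2 × Fin 2 → Fin 2 × Fin 2 → ℂ)
    (h : ∑ v, ∑ w, ((‖F v w‖ ^ 2 : ℝ) : ℂ) = 0) : ∀ v w, F v w = 0 := by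
  have h1 : ∑ v, ∑ w, ‖F v w‖ ^ 2 = 0 := by
    apply Complex.ofReal_injective
    simpa only [Complex.ofReal_sum, Complex.ofReal_zero] using h
  intro v w
  have h2 := (Finset.sum_eq_zero_iff_of_nonneg
    (fun v _ => Finset.sum_nonneg fun w _ => by positivity)).1 h1 v (Finset.mem_univ _)
  have h3 := (Finset.sum_eq_zero_iff_of_nonneg (fun w _ => by positivity)).1 h2 w
    (Finset.mem_univ _)
  simpa using h3

theorem phi_nonneg (Ψ : Q3 → ℂ) (h : ∑ v : Q3, ‖Ψ v‖ ^ 2 = 1) : 0 ≤ phiABC Ψ := by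
  have := phi_ge Ψ h
  have a := tr_sq_le (rhoA_psd Ψ) (rhoA_tr Ψ h)
  have b := tr_sq_le (rhoB_psd Ψ) (rhoB_tr Ψ h)
  linarith

theorem herm_tr_eq {n : Type} [Fintype n] [DecidableEq n] {M : Matrix n n ℂ} (hM : M.PosSemidef)
    (ht : ((M ^ 2).trace).re = 1) : (M ^ 2).trace = 1 := by
  have := (Complex.le_def.1 (sq_psd hM).trace_nonneg).2
  apply Complex.ext
  · simpa using ht
  · simpa using this.symm

theorem phi_zero_prod (Ψ : Q3 → ℂ) (h : ∑ v : Q3, ‖Ψ v‖ ^ 2 = 1) (h0 : phiABC Ψ = 0) :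
    ∃ f g k : Fin 2 → ℂ, Ψ = fun v : Q3 => f v.1 * g v.2.1 * k v.2.2 := by
  have hge := phi_ge Ψ h
  have a := tr_sq_le (rhoA_psd Ψ) (rhoA_tr Ψ h)
  have b := tr_sq_le (rhoB_psd Ψ) (rhoB_tr Ψ h)
  have a1 := herm_tr_eq (rhoA_psd Ψ) (by linarith)
  have b1 := herm_tr_eq (rhoB_psd Ψ) (by linarith)
  have ia := trA_id Ψ
  have ib := trB_id Ψ
  rw [rhoA_tr Ψ h, a1, one_pow, left_eq_add] at ia
  rw [rhoB_tr Ψ h, b1, one_pow, left_eq_add] at ib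
  have za := sum_sq_zero _ ia
  have zb := sum_sq_zero _ ib
  have ka : ∀ (a a' : Fin 2) (v w : Fin 2 × Fin 2), Ψ (a, v) * Ψ (a', w) = Ψ (a', v) * Ψ (a, w) := by
    intro a a' v w
    have h1 := za v w
    fin_cases a <;> fin_cases a' <;> simp
    · linear_combination h1
    · linear_combination -h1
  have kb : ∀ (b b' a a' c c' : Fin 2),
      Ψ (a, b, c) * Ψ (a', b', c') = Ψ (a, b', c) * Ψ (a', b, c') := by
    intro b b' a a' c c'
    have h1 := zb (a, c) (a', c')
    simp only at h1
    fin_cases b <;> fin_cases b' <;> simp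
    · linear_combination h1
    · linear_combination -h1
  obtain ⟨⟨a0, b0, c0⟩, hv⟩ : ∃ v, Ψ v ≠ 0 := by
    by_contra! hc
    simp [hc] at h
  refine ⟨fun a => Ψ (a, b0, c0) / Ψ (a0, b0, c0), fun b => Ψ (a0, b, c0) / Ψ (a0, b0, c0),
    fun c => Ψ (a0, b0, c), ?_⟩
  ext ⟨a, b, c⟩
  simp only
  field_simp
  have h1 := ka a a0 (b, c) (b0, c0)
  have h2 := kb b b0 a0 a0 c c0
  linear_combination Ψ (a0, b0, c0) * h1 + Ψ (a, b0, c0) * h2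

theorem phi_prod (f g k : Fin 2 → ℂ) (Ψ : Q3 → ℂ)
    (hΨ : Ψ = fun v : Q3 => f v.1 * g v.2.1 * k v.2.2) (h : ∑ v : Q3, ‖Ψ v‖ ^ 2 = 1) :
    phiABC Ψ = 0 := by
  have tA := rhoA_tr Ψ h
  have tB := rhoB_tr Ψ h
  have nc := norm_cond Ψ h
  subst hΨ
  simp only [Fintype.sum_prod_type, Fin.sum_univ_two, map_mul] at nc
  have hA : rhoA (fun v : Q3 => f v.1 * g v.2.1 * k v.2.2) ^ 2
      = rhoA (fun v : Q3 => f v.1 * g v.2.1 * k v.2.2) := by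
    ext i j
    simp only [rhoA, Fin.sum_univ_two, pow_two, Matrix.mul_apply, map_mul]
    linear_combination (f i * (starRingEnd ℂ) (f j) *
      (g 0 * (starRingEnd ℂ) (g 0) + g 1 * (starRingEnd ℂ) (g 1)) *
      (k 0 * (starRingEnd ℂ) (k 0) + k 1 * (starRingEnd ℂ) (k 1))) * nc
  have hB : rhoB (fun v : Q3 => f v.1 * g v.2.1 * k v.2.2) ^ 2
      = rhoB (fun v : Q3 => f v.1 * g v.2.1 * k v.2.2) := by
    ext i j
    simp only [rhoB, Fin.sum_univ_two, pow_two, Matrix.mul_apply, map_mul]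
    linear_combination (g i * (starRingEnd ℂ) (g j) *
      (f 0 * (starRingEnd ℂ) (f 0) + f 1 * (starRingEnd ℂ) (f 1)) *
      (k 0 * (starRingEnd ℂ) (k 0) + k 1 * (starRingEnd ℂ) (k 1))) * nc
  have hM : rhoAB (fun v : Q3 => f v.1 * g v.2.1 * k v.2.2)
      = rhoA (fun v : Q3 => f v.1 * g v.2.1 * k v.2.2) ⊗ₖ
        rhoB (fun v : Q3 => f v.1 * g v.2.1 * k v.2.2) := by
    ext ⟨i, i'⟩ ⟨j, j'⟩
    simp only [rhoA, rhoB, rhoAB, Fin.sum_univ_two, kroneckerMap_apply, map_mul]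
    linear_combination (- (f i * (starRingEnd ℂ) (f j) * (g i' * (starRingEnd ℂ) (g j')) *
      (k 0 * (starRingEnd ℂ) (k 0) + k 1 * (starRingEnd ℂ) (k 1)))) * nc
  set Ψ : Q3 → ℂ := fun v : Q3 => f v.1 * g v.2.1 * k v.2.2
  have hM2 : rhoAB Ψ ^ 2 = rhoAB Ψ := by
    rw [hM, pow_two, ← mul_kronecker_mul, ← pow_two, ← pow_two, hA, hB]
  rw [phi_expand Ψ h]
  have hA3 : rhoA Ψ ^ 3 = rhoA Ψ := by rw [pow_succ, hA, ← pow_two, hA]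
  have hB3 : rhoB Ψ ^ 3 = rhoB Ψ := by rw [pow_succ, hB, ← pow_two, hB]
  have hM3 : rhoAB Ψ ^ 3 = rhoAB Ψ := by rw [pow_succ, hM2, ← pow_two, hM2]
  rw [hA3, hB3, hM3, hA, hB, hM2, ← hM, ← pow_two, hM2, tr_AB_A, tr_AB_B, ← pow_two, ← pow_two,
    hA, hB, rhoAB_tr Ψ h, tA, tB]
  norm_num

theorem phi_cont : Continuous phiABC := by
  have h1 : Continuous rhoAB := by
    refine continuous_matrix fun i j => ?_
    simp only [rhoAB]
    fun_prop
  have h2 : Continuous rhoA := by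
    refine continuous_matrix fun i j => ?_
    simp only [rhoA]
    fun_prop
  have h3 : Continuous rhoB := by
    refine continuous_matrix fun i j => ?_
    simp only [rhoB]
    fun_prop
  have h4 : Continuous fun Ψ => rhoA Ψ ⊗ₖ (1 : Matrix (Fin 2) (Fin 2) ℂ) := by
    refine continuous_matrix fun i j => ?_
    simp only [kroneckerMap_apply]
    exact (h2.matrix_elem _ _).mul continuous_const
  have h5 : Continuous fun Ψ => (1 : Matrix (Fin 2) (Fin 2) ℂ) ⊗ₖ rhoB Ψ := by
    refine continuous_matrix fun i j => ?_
    simp only [kroneckerMap_apply]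
    exact continuous_const.mul (h3.matrix_elem _ _)
  unfold phiABC
  have h6 := ((((h1.const_smul (2 : ℂ)).add h4).add h5).pow 3).matrix_trace
  have h7 := (h1.pow 2).matrix_trace
  exact (continuous_const.sub (Complex.continuous_re.comp h6)).sub
    (continuous_const.mul (Complex.continuous_re.comp h7))

/-- Unit vectors. -/
def unitV : Set (Q3 → ℂ) := {ψ | ∑ v : Q3, ‖ψ v‖ ^ 2 = 1}

theorem unitV_compact : IsCompact unitV := by
  refine Metric.isCompact_of_isClosed_isBounded ?_ ?_
  · exact isClosed_eq (by fun_prop) continuous_const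
  · refine (Metric.isBounded_closedBall (x := (0 : Q3 → ℂ)) (r := 1)).subset ?_
    intro ψ hψ
    rw [mem_closedBall_zero_iff, pi_norm_le_iff_of_nonneg zero_le_one]
    intro v
    have : ‖ψ v‖ ^ 2 ≤ 1 := by
      rw [← (hψ : ∑ v : Q3, ‖ψ v‖ ^ 2 = 1)]
      exact Finset.single_le_sum (f := fun v => ‖ψ v‖ ^ 2) (fun j _ => by positivity)
        (Finset.mem_univ v)
    exact (sq_le_one_iff₀ (norm_nonneg _)).1 this

/-- The graph map. -/
def gr (ψ : Q3 → ℂ) : Matrix Q3 Q3 ℂ × ℝ := (Matrix.vecMulVec ψ (star ψ), phiABC ψ)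

theorem gr_cont : Continuous gr := by
  refine Continuous.prodMk ?_ phi_cont
  refine continuous_matrix fun i j => ?_
  simp only [vecMulVec_apply, Pi.star_apply]
  fun_prop

theorem hull_compact : IsCompact (convexHull ℝ (gr '' unitV)) :=
  isCompact_convexHull_aux (unitV_compact.image gr_cont)

theorem mem_hull_iff (ρ : Matrix Q3 Q3 ℂ) (x : ℝ) : (ρ, x) ∈ convexHull ℝ (gr '' unitV) ↔
    ∃ (m : ℕ) (p : Fin m → ℝ) (ψ : Fin m → Q3 → ℂ),
    (∀ ℓ, 0 < p ℓ) ∧ (∑ ℓ, p ℓ = 1) ∧ (∀ ℓ, ∑ v : Q3, ‖ψ ℓ v‖ ^ 2 = 1) ∧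
    ρ = ∑ ℓ, (p ℓ : ℂ) • Matrix.vecMulVec (ψ ℓ) (star (ψ ℓ)) ∧
    x = ∑ ℓ, p ℓ * phiABC (ψ ℓ) := by
  constructor
  · intro hx
    obtain ⟨ι, _, z, w, hz, -, hw, hw1, hx⟩ := eq_pos_convex_span_of_mem_convexHull hx
    let e := Fintype.equivFin ι
    have hz' : ∀ i, ∃ ψ, ψ ∈ unitV ∧ gr ψ = z i := fun i => hz ⟨i, rfl⟩
    choose ψ hψ hgr using hz'
    refine ⟨Fintype.card ι, fun j => w (e.symm j), fun j => ψ (e.symm j), fun j => hw _, ?_,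
      fun j => hψ _, ?_, ?_⟩
    · rw [← hw1]
      exact Equiv.sum_comp e.symm w
    · have h1 := congrArg Prod.fst hx
      rw [Prod.fst_sum] at h1
      dsimp only at h1
      dsimp only
      rw [← h1, ← Equiv.sum_comp e.symm]
      refine Finset.sum_congr rfl fun j _ => ?_
      rw [← hgr]
      ext a b
      simp [gr]
    · have h1 := congrArg Prod.snd hx
      rw [Prod.snd_sum] at h1
      dsimp only at h1
      dsimp only
      rw [← h1, ← Equiv.sum_comp e.symm]
      refine Finset.sum_congr rfl fun j _ => ?_
      rw [← hgr]
      simp [gr]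
  · rintro ⟨m, p, ψ, hp, hp1, hψ, rfl, rfl⟩
    have := (convex_convexHull ℝ (gr '' unitV)).sum_mem (t := Finset.univ) (fun i _ => (hp i).le)
      hp1 (fun i _ => subset_convexHull ℝ _ ⟨ψ i, hψ i, rfl⟩)
    convert this using 1
    refine Prod.ext ?_ ?_
    · rw [Prod.fst_sum]
      dsimp only
      refine Finset.sum_congr rfl fun j _ => ?_
      ext a b
      simp [gr]
    · rw [Prod.snd_sum]
      dsimp only
      refine Finset.sum_congr rfl fun j _ => ?_
      simp [gr]

theorem hull_nonempty (ρ : Matrix Q3 Q3 ℂ) (hρ : ρ.PosSemidef) (htr : ρ.trace = 1) :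
    ∃ x, (ρ, x) ∈ convexHull ℝ (gr '' unitV) := by
  have hs := hρ.1.spectral_theorem
  set U := hρ.1.eigenvectorUnitary with hU
  have hsum : ∑ i, hρ.1.eigenvalues i = 1 := by
    have := hρ.1.trace_eq_sum_eigenvalues
    rw [htr] at this
    apply Complex.ofReal_injective
    rw [Complex.ofReal_sum, Complex.ofReal_one]
    exact this.symm
  let ψ : Q3 → Q3 → ℂ := fun i v => (U : Matrix Q3 Q3 ℂ) v i
  have hψ : ∀ i, ψ i ∈ unitV := by
    intro i
    have h1 : ((star (U : Matrix Q3 Q3 ℂ)) * (U : Matrix Q3 Q3 ℂ)) i i = 1 := by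
      rw [Unitary.coe_star_mul_self]; simp
    rw [Matrix.mul_apply] at h1
    apply Complex.ofReal_injective
    rw [Complex.ofReal_sum, Complex.ofReal_one, ← h1]
    refine Finset.sum_congr rfl fun v _ => ?_
    rw [← Complex.normSq_eq_norm_sq, ← Complex.mul_conj, mul_comm]
    simp [ψ]
  have := (convex_convexHull ℝ (gr '' unitV)).sum_mem (t := Finset.univ)
      (fun i _ => hρ.eigenvalues_nonneg i)
      hsum (fun i _ => subset_convexHull ℝ _ ⟨ψ i, hψ i, rfl⟩)
  refine ⟨(∑ i, hρ.1.eigenvalues i • gr (ψ i)).2, ?_⟩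
  · convert this using 1
    refine Prod.ext ?_ rfl
    rw [Prod.fst_sum]
    simp only
    conv_lhs => rw [hs, Unitary.conjStarAlgAut_apply]
    ext a b
    rw [Matrix.mul_apply, Matrix.sum_apply]
    refine Finset.sum_congr rfl fun j _ => ?_
    rw [Matrix.mul_diagonal]
    simp [gr, ψ, vecMulVec_apply]
    ring

theorem convexRoof_phiABC_eq_zero_iff_fullySep
    (ρ : Matrix Q3 Q3 ℂ) (hρ : ρ.PosSemidef) (htr : ρ.trace = 1) :
    convexRoof phiABC ρ = 0 ↔ FullySep3 ρ := by
  have hset : convexRoof phiABC ρ = sInf {x : ℝ | (ρ, x) ∈ convexHull ℝ (gr '' unitV)} := by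
    unfold convexRoof
    congr 1
    ext x
    exact (mem_hull_iff ρ x).symm
  have hlb : ∀ x ∈ {x : ℝ | (ρ, x) ∈ convexHull ℝ (gr '' unitV)}, 0 ≤ x := by
    intro x hx
    obtain ⟨m, p, ψ, hp, hp1, hψ, -, rfl⟩ := (mem_hull_iff ρ x).1 hx
    exact Finset.sum_nonneg fun i _ => mul_nonneg (hp i).le (phi_nonneg _ (hψ i))
  rw [hset]
  constructor
  · intro h0
    have hcl : IsClosed {x : ℝ | (ρ, x) ∈ convexHull ℝ (gr '' unitV)} :=
      hull_compact.isClosed.preimage (by fun_prop : Continuous fun x : ℝ => (ρ, x))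
    have hmem := hcl.csInf_mem (hull_nonempty ρ hρ htr) ⟨0, hlb⟩
    rw [h0] at hmem
    obtain ⟨m, p, ψ, hp, hp1, hψ, hd, hx⟩ := (mem_hull_iff ρ 0).1 hmem
    have hz := (Finset.sum_eq_zero_iff_of_nonneg
      (fun i _ => mul_nonneg (hp i).le (phi_nonneg _ (hψ i)))).1 hx.symm
    have hz' : ∀ i, phiABC (ψ i) = 0 := fun i =>
      (mul_eq_zero.1 (hz i (Finset.mem_univ i))).resolve_left (hp i).ne'
    have hpr := fun i => phi_zero_prod (ψ i) (hψ i) (hz' i)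
    choose f g k hfgk using hpr
    refine ⟨m, p, f, g, k, fun j => (hp j).le, hp1, fun j => ?_, ?_⟩
    · have := hψ j
      rw [hfgk j] at this
      exact this
    · rw [hd]
      refine Finset.sum_congr rfl fun j _ => ?_
      rw [← hfgk j]
  · rintro ⟨m, p, f, g, k, hp, hp1, hn, hd⟩
    have hmem : (ρ, (0 : ℝ)) ∈ convexHull ℝ (gr '' unitV) := by
      have := (convex_convexHull ℝ (gr '' unitV)).sum_mem (t := Finset.univ) (fun i _ => hp i)
        hp1 (fun i _ => subset_convexHull ℝ _
          ⟨fun v : Q3 => f i v.1 * g i v.2.1 * k i v.2.2, hn i, rfl⟩)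
      convert this using 1
      refine Prod.ext ?_ ?_
      · rw [Prod.fst_sum, hd]
        dsimp only
        refine Finset.sum_congr rfl fun j _ => ?_
        ext a b
        simp [gr]
      · rw [Prod.snd_sum]
        dsimp only
        symm
        refine Finset.sum_eq_zero fun j _ => ?_
        simp [gr, phi_prod (f j) (g j) (k j) _ rfl (hn j)]
    exact le_antisymm (csInf_le ⟨0, hlb⟩ hmem) (le_csInf ⟨0, hmem⟩ hlb)

end
end

section
/- Let ρ be a tripartite density matrix on ℂ^{d_A}⊗ℂ^{d_B}⊗ℂ^{d_C} (finite positive dimensions), and define E_{1−I₅}(ρ) = inf{Σ_ℓ p_ℓ (1 − I₅(ψ_ℓ))^{2/3}}, the infimum over all finite decompositions ρ = Σ_ℓ p_ℓ |ψ_ℓ⟩⟨ψ_ℓ| with p_ℓ > 0, Σ_ℓ p_ℓ = 1 and each ψ_ℓ a unit vector, where I₅(ψ) = Tr[(ρ_BC(ψ)^Γ)³] is the third-order negativity of the pure state ψ. Then E_{1−I₅}(ρ) = 0 if and only if ρ is fully separable. -/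
open scoped BigOperators ComplexOrder
open Matrix

noncomputable section

/-- Partial transpose over the second tensor factor. -/
def ptranspose {d d' : ℕ} (M : Matrix (Fin d × Fin d') (Fin d × Fin d') ℂ) :
    Matrix (Fin d × Fin d') (Fin d × Fin d') ℂ :=
  fun p q => M (p.1, q.2) (q.1, p.2)

/-- Reduced density matrix on the last two factors of a tripartite pure state. -/
def rhoBC (dA dB dC : ℕ) (ψ : Fin dA × Fin dB × Fin dC → ℂ) :
    Matrix (Fin dB × Fin dC) (Fin dB × Fin dC) ℂ :=
  fun p q => ∑ a : Fin dA, ψ (a, p.1, p.2) * (starRingEnd ℂ) (ψ (a, q.1, q.2))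

/-- Third-order negativity of a tripartite pure state. -/
def I5 (dA dB dC : ℕ) (ψ : Fin dA × Fin dB × Fin dC → ℂ) : ℝ :=
  ((ptranspose (rhoBC dA dB dC ψ)) ^ 3).trace.re

/-- The convex-roof quantity `E_{1−I₅}`. -/
def E1mI5 (dA dB dC : ℕ)
    (ρ : Matrix (Fin dA × Fin dB × Fin dC) (Fin dA × Fin dB × Fin dC) ℂ) : ℝ :=
  sInf {x : ℝ | ∃ (m : ℕ) (p : Fin m → ℝ) (ψ : Fin m → Fin dA × Fin dB × Fin dC → ℂ),
    (∀ ℓ, 0 < p ℓ) ∧ (∑ ℓ, p ℓ = 1) ∧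
    (∀ ℓ, ∑ v : Fin dA × Fin dB × Fin dC, ‖ψ ℓ v‖ ^ 2 = 1) ∧
    ρ = ∑ ℓ, (p ℓ : ℂ) • Matrix.vecMulVec (ψ ℓ) (star (ψ ℓ)) ∧
    x = ∑ ℓ, p ℓ * (1 - I5 dA dB dC (ψ ℓ)) ^ ((2 : ℝ) / 3)}

/-- Full separability of a tripartite density matrix. -/
def FullySep (dA dB dC : ℕ)
    (ρ : Matrix (Fin dA × Fin dB × Fin dC) (Fin dA × Fin dB × Fin dC) ℂ) : Prop :=
  ∃ (m : ℕ) (p : Fin m → ℝ)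
    (f : Fin m → Fin dA → ℂ) (g : Fin m → Fin dB → ℂ) (h : Fin m → Fin dC → ℂ),
    (∀ j, 0 ≤ p j) ∧ (∑ j, p j = 1) ∧
    (∀ j, ∑ v : Fin dA × Fin dB × Fin dC, ‖f j v.1 * g j v.2.1 * h j v.2.2‖ ^ 2 = 1) ∧
    ρ = ∑ j, (p j : ℂ) •
      Matrix.vecMulVec (fun v : Fin dA × Fin dB × Fin dC => f j v.1 * g j v.2.1 * h j v.2.2)
        (star fun v : Fin dA × Fin dB × Fin dC => f j v.1 * g j v.2.1 * h j v.2.2)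

/-- Convex hull of a compact set in finite dimension is compact. -/
theorem aux_compact_convexHull {E : Type*} [AddCommGroup E] [Module ℝ E] [TopologicalSpace E]
    [IsTopologicalAddGroup E] [ContinuousSMul ℝ E] [FiniteDimensional ℝ E] {s : Set E}
    (hs : IsCompact s) : IsCompact (convexHull ℝ s) := by
  classical
  rcases s.eq_empty_or_nonempty with rfl | ⟨x0, hx0⟩
  · simp
  set n := Module.finrank ℝ E + 1 with hn
  have key : convexHull ℝ s = (fun q : (Fin n → ℝ) × (Fin n → E) => ∑ i, q.1 i • q.2 i) ''
      (stdSimplex ℝ (Fin n) ×ˢ Set.pi Set.univ (fun _ => s)) := by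
    apply Set.Subset.antisymm
    · intro x hx
      obtain ⟨ι, _, z, w, hz, hai, hw, hw1, hx⟩ := eq_pos_convex_span_of_mem_convexHull hx
      have hcard : Fintype.card ι ≤ Fintype.card (Fin n) := by
        rw [Fintype.card_fin, hn]
        have := hai.card_le_finrank_succ
        refine this.trans ?_
        gcongr
        exact Submodule.finrank_le _
      obtain ⟨e⟩ := Function.Embedding.nonempty_of_card_le hcard
      refine ⟨(Function.extend e w 0, Function.extend e z (fun _ => x0)), ⟨⟨?_, ?_⟩, ?_⟩, ?_⟩
      · intro j
        by_cases h : ∃ i, e i = j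
        · obtain ⟨i, rfl⟩ := h
          simp only [e.injective.extend_apply]
          exact (hw i).le
        · simp [Function.extend_apply' _ _ _ h]
      · simp only
        rw [Fintype.sum_of_injective e e.injective w _ ?_ ?_ |>.symm, hw1]
        · intro j h
          rw [Function.extend_apply' _ _ _ h]; rfl
        · intro i
          rw [e.injective.extend_apply]
      · intro j _
        by_cases h : ∃ i, e i = j
        · obtain ⟨i, rfl⟩ := h
          simp only [e.injective.extend_apply]
          exact hz ⟨i, rfl⟩
        · simpa [Function.extend_apply' _ _ _ h] using hx0
      · simp only
        rw [← hx]
        symm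
        apply Fintype.sum_of_injective e e.injective
        · intro j h
          rw [Function.extend_apply' _ _ _ h]; simp
        · intro i
          rw [e.injective.extend_apply, e.injective.extend_apply]
    · rintro _ ⟨⟨w, z⟩, ⟨⟨hw, hw1⟩, hz⟩, rfl⟩
      exact (convex_convexHull ℝ s).sum_mem (fun i _ => hw i) hw1
        (fun i _ => subset_convexHull ℝ s (hz i trivial))
  rw [key]
  apply IsCompact.image
  · exact (isCompact_stdSimplex ℝ (Fin n)).prod (isCompact_univ_pi fun _ => hs)
  · fun_prop

/-- The permutation of the three copies: identity on A, cyclic on B, anticyclic on C. -/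
def auxPerm (α β γ : Type*) :
    ((α × β × γ) × (α × β × γ) × (α × β × γ)) ≃ ((α × β × γ) × (α × β × γ) × (α × β × γ)) where
  toFun t := ((t.1.1, t.2.1.2.1, t.2.2.2.2), (t.2.1.1, t.2.2.2.1, t.1.2.2),
    (t.2.2.1, t.1.2.1, t.2.1.2.2))
  invFun t := ((t.1.1, t.2.2.2.1, t.2.1.2.2), (t.2.1.1, t.1.2.1, t.2.2.2.2),
    (t.2.2.1, t.2.1.2.1, t.1.2.2))
  left_inv _ := rfl
  right_inv _ := rfl

/-- Threefold tensor power. -/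
def auxX {V : Type*} (ψ : V → ℂ) (t : V × V × V) : ℂ := ψ t.1 * ψ t.2.1 * ψ t.2.2

theorem aux_I5 (dA dB dC : ℕ) (ψ : Fin dA × Fin dB × Fin dC → ℂ) :
    I5 dA dB dC ψ = (∑ t, auxX ψ t * (starRingEnd ℂ) (auxX ψ (auxPerm _ _ _ t))).re := by
  unfold I5
  congr 1
  have h1 : ((ptranspose (rhoBC dA dB dC ψ)) ^ 3).trace =
      ∑ x : (Fin dB × Fin dC) × (Fin dB × Fin dC) × (Fin dB × Fin dC) ×
        Fin dA × Fin dA × Fin dA,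
        (ψ (x.2.2.2.1, x.1.1, x.2.1.2) * (starRingEnd ℂ) (ψ (x.2.2.2.1, x.2.1.1, x.1.2))) *
        (ψ (x.2.2.2.2.1, x.2.1.1, x.2.2.1.2) *
          (starRingEnd ℂ) (ψ (x.2.2.2.2.1, x.2.2.1.1, x.2.1.2))) *
        (ψ (x.2.2.2.2.2, x.2.2.1.1, x.1.2) *
          (starRingEnd ℂ) (ψ (x.2.2.2.2.2, x.1.1, x.2.2.1.2))) := by
    rw [Fintype.sum_prod_type]
    simp only [Matrix.trace, Matrix.diag]
    refine Finset.sum_congr rfl fun p _ => ?_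
    rw [pow_succ, pow_two, Matrix.mul_assoc, Matrix.mul_apply]
    conv_rhs => rw [Fintype.sum_prod_type]
    refine Finset.sum_congr rfl fun q _ => ?_
    conv_rhs => rw [Fintype.sum_prod_type]
    rw [Matrix.mul_apply, Finset.mul_sum]
    refine Finset.sum_congr rfl fun r _ => ?_
    simp only [ptranspose, rhoBC, Fintype.sum_prod_type]
    rw [Finset.sum_mul]
    refine Finset.sum_congr rfl fun a _ => ?_
    rw [Finset.sum_mul, Finset.mul_sum]
    refine Finset.sum_congr rfl fun b _ => ?_
    rw [Finset.mul_sum, Finset.mul_sum]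
    refine Finset.sum_congr rfl fun c _ => ?_
    ring
  rw [h1]
  let e : ((Fin dB × Fin dC) × (Fin dB × Fin dC) × (Fin dB × Fin dC) ×
        Fin dA × Fin dA × Fin dA) ≃ ((Fin dA × Fin dB × Fin dC) × (Fin dA × Fin dB × Fin dC) ×
          (Fin dA × Fin dB × Fin dC)) :=
    { toFun := fun x => ((x.2.2.2.1, x.1.1, x.2.1.2), (x.2.2.2.2.1, x.2.1.1, x.2.2.1.2),
        (x.2.2.2.2.2, x.2.2.1.1, x.1.2))
      invFun := fun t => ((t.1.2.1, t.2.2.2.2), (t.2.1.2.1, t.1.2.2), (t.2.2.2.1, t.2.1.2.2),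
        t.1.1, t.2.1.1, t.2.2.1)
      left_inv := fun _ => rfl
      right_inv := fun _ => rfl }
  refine Fintype.sum_equiv e _ _ fun x => ?_
  simp only [e, auxX, auxPerm, Equiv.coe_fn_mk, map_mul]
  ring

theorem aux_norm {V : Type*} [Fintype V] (ψ : V → ℂ) (h : ∑ v, ‖ψ v‖ ^ 2 = 1) :
    ∑ t, ‖auxX ψ t‖ ^ 2 = 1 := by
  simp only [auxX, Fintype.sum_prod_type, norm_mul, mul_pow, ← Finset.mul_sum, h, mul_one]

theorem aux_dist (dA dB dC : ℕ) (ψ : Fin dA × Fin dB × Fin dC → ℂ)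
    (h : ∑ v, ‖ψ v‖ ^ 2 = 1) :
    ∑ t, ‖auxX ψ t - auxX ψ (auxPerm _ _ _ t)‖ ^ 2 = 2 * (1 - I5 dA dB dC ψ) := by
  have e : ∀ z w : ℂ, ‖z - w‖ ^ 2 = ‖z‖ ^ 2 + ‖w‖ ^ 2 - 2 * (z * (starRingEnd ℂ) w).re := by
    intro z w
    simp only [← Complex.normSq_eq_norm_sq]
    exact Complex.normSq_sub z w
  simp only [e, Finset.sum_sub_distrib, Finset.sum_add_distrib, ← Finset.mul_sum]
  rw [aux_I5, Complex.re_sum, aux_norm ψ h,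
    Equiv.sum_comp (auxPerm _ _ _) (fun t => ‖auxX ψ t‖ ^ 2), aux_norm ψ h]
  ring

theorem aux_I5_le (dA dB dC : ℕ) (ψ : Fin dA × Fin dB × Fin dC → ℂ)
    (h : ∑ v, ‖ψ v‖ ^ 2 = 1) : 0 ≤ 1 - I5 dA dB dC ψ := by
  have := aux_dist dA dB dC ψ h
  have h2 : 0 ≤ ∑ t, ‖auxX ψ t - auxX ψ (auxPerm _ _ _ t)‖ ^ 2 := by positivity
  linarith

theorem aux_prod (dA dB dC : ℕ) (f : Fin dA → ℂ) (g : Fin dB → ℂ) (k : Fin dC → ℂ)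
    (h : ∑ v : Fin dA × Fin dB × Fin dC, ‖f v.1 * g v.2.1 * k v.2.2‖ ^ 2 = 1) :
    1 - I5 dA dB dC (fun v => f v.1 * g v.2.1 * k v.2.2) = 0 := by
  have := aux_dist dA dB dC _ h
  have h2 : ∑ t, ‖auxX (fun v : Fin dA × Fin dB × Fin dC => f v.1 * g v.2.1 * k v.2.2) t -
      auxX (fun v : Fin dA × Fin dB × Fin dC => f v.1 * g v.2.1 * k v.2.2)
        (auxPerm _ _ _ t)‖ ^ 2 = 0 := by
    refine Finset.sum_eq_zero fun t _ => ?_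
    simp only [auxX, auxPerm, Equiv.coe_fn_mk]
    rw [sub_eq_zero.mpr (by ring)]
    simp
  linarith

theorem aux_prod_conv (dA dB dC : ℕ) (ψ : Fin dA × Fin dB × Fin dC → ℂ)
    (h : ∑ v, ‖ψ v‖ ^ 2 = 1) (h0 : 1 - I5 dA dB dC ψ = 0) :
    ∃ (f : Fin dA → ℂ) (g : Fin dB → ℂ) (k : Fin dC → ℂ),
      ψ = fun v => f v.1 * g v.2.1 * k v.2.2 := by
  have hd := aux_dist dA dB dC ψ h
  rw [h0, mul_zero, Finset.sum_eq_zero_iff_of_nonneg (fun _ _ => by positivity)] at hd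
  have hne : ∃ v, ψ v ≠ 0 := by
    by_contra hcon
    push Not at hcon
    simp [hcon] at h
  obtain ⟨⟨a0, b0, c0⟩, hv⟩ := hne
  refine ⟨fun a => ψ (a, b0, c0) / ψ (a0, b0, c0), fun b => ψ (a0, b, c0) / ψ (a0, b0, c0),
    fun c => ψ (a0, b0, c), ?_⟩
  funext ⟨a, b, c⟩
  have := hd ((a, b, c), (a0, b0, c0), (a0, b0, c0)) (Finset.mem_univ _)
  simp only [auxX, auxPerm, Equiv.coe_fn_mk] at this
  have h3 := sub_eq_zero.mp (norm_eq_zero.mp (pow_eq_zero_iff two_ne_zero |>.mp this))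
  simp only
  field_simp
  linear_combination h3

/-- The graph map. -/
def auxG (dA dB dC : ℕ) (ψ : Fin dA × Fin dB × Fin dC → ℂ) :
    Matrix (Fin dA × Fin dB × Fin dC) (Fin dA × Fin dB × Fin dC) ℂ × ℝ :=
  (Matrix.vecMulVec ψ (star ψ), (1 - I5 dA dB dC ψ) ^ ((2 : ℝ) / 3))

/-- The unit sphere. -/
def auxS (V : Type*) [Fintype V] : Set (V → ℂ) := {ψ | ∑ v, ‖ψ v‖ ^ 2 = 1}

theorem aux_compact_S (V : Type*) [Fintype V] : IsCompact (auxS V) := by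
  apply Metric.isCompact_of_isClosed_isBounded
  · exact isClosed_eq (by fun_prop) continuous_const
  · refine (Metric.isBounded_closedBall (x := (0 : V → ℂ)) (r := 1)).subset ?_
    intro ψ hψ
    rw [mem_closedBall_zero_iff, pi_norm_le_iff_of_nonneg zero_le_one]
    intro v
    have : ‖ψ v‖ ^ 2 ≤ ∑ v, ‖ψ v‖ ^ 2 :=
      Finset.single_le_sum (f := fun v => ‖ψ v‖ ^ 2) (fun _ _ => by positivity) (Finset.mem_univ v)
    rw [show ∑ v, ‖ψ v‖ ^ 2 = 1 from hψ] at this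
    nlinarith [norm_nonneg (ψ v)]

theorem aux_cont (dA dB dC : ℕ) : Continuous (auxG dA dB dC) := by
  unfold auxG
  have hI : Continuous (I5 dA dB dC) := by
    have : I5 dA dB dC = fun ψ => _ := funext fun ψ => aux_I5 dA dB dC ψ
    rw [this]
    unfold auxX
    fun_prop
  refine Continuous.prodMk ?_ ?_
  · refine continuous_matrix fun i j => ?_
    simp only [Matrix.vecMulVec_apply, Pi.star_apply]
    fun_prop
  · exact (continuous_const.sub hI).rpow_const (fun _ => Or.inr (by norm_num))

theorem aux_mem (dA dB dC : ℕ) {ι : Type*} [Fintype ι] (p : ι → ℝ)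
    (ψ : ι → Fin dA × Fin dB × Fin dC → ℂ) (hp : ∀ i, 0 ≤ p i) (hp1 : ∑ i, p i = 1)
    (hψ : ∀ i, ∑ v, ‖ψ i v‖ ^ 2 = 1) :
    (∑ i, (p i : ℂ) • Matrix.vecMulVec (ψ i) (star (ψ i)),
      ∑ i, p i * (1 - I5 dA dB dC (ψ i)) ^ ((2 : ℝ) / 3)) ∈
      convexHull ℝ (auxG dA dB dC '' auxS _) := by
  have := (convex_convexHull ℝ (auxG dA dB dC '' auxS _)).sum_mem (t := Finset.univ)
    (w := p) (z := fun i => auxG dA dB dC (ψ i)) (fun i _ => hp i) hp1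
    (fun i _ => subset_convexHull ℝ _ ⟨ψ i, hψ i, rfl⟩)
  convert this using 1
  ext1
  · simp only [Prod.fst_sum, Prod.smul_fst, auxG]
    rfl
  · simp only [Prod.snd_sum, Prod.smul_snd, auxG]
    rfl

theorem aux_of_mem (dA dB dC : ℕ)
    (ρ : Matrix (Fin dA × Fin dB × Fin dC) (Fin dA × Fin dB × Fin dC) ℂ) (x : ℝ)
    (h : (ρ, x) ∈ convexHull ℝ (auxG dA dB dC '' auxS _)) :
    ∃ (m : ℕ) (p : Fin m → ℝ) (ψ : Fin m → Fin dA × Fin dB × Fin dC → ℂ),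
    (∀ ℓ, 0 < p ℓ) ∧ (∑ ℓ, p ℓ = 1) ∧
    (∀ ℓ, ∑ v : Fin dA × Fin dB × Fin dC, ‖ψ ℓ v‖ ^ 2 = 1) ∧
    ρ = ∑ ℓ, (p ℓ : ℂ) • Matrix.vecMulVec (ψ ℓ) (star (ψ ℓ)) ∧
    x = ∑ ℓ, p ℓ * (1 - I5 dA dB dC (ψ ℓ)) ^ ((2 : ℝ) / 3) := by
  obtain ⟨ι, _, z, w, hz, -, hw, hw1, hx⟩ := eq_pos_convex_span_of_mem_convexHull h
  have hz' : ∀ i, ∃ ψ ∈ auxS _, auxG dA dB dC ψ = z i := fun i => hz ⟨i, rfl⟩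
  choose ψ hψ hψz using hz'
  let e := (Fintype.equivFin ι).symm
  refine ⟨Fintype.card ι, fun j => w (e j), fun j => ψ (e j), fun j => hw _, ?_,
    fun j => hψ _, ?_, ?_⟩
  · rw [← hw1]; exact Equiv.sum_comp e w
  · rw [Equiv.sum_comp e (fun i => (w i : ℂ) • Matrix.vecMulVec (ψ i) (star (ψ i)))]
    have := congrArg Prod.fst hx
    rw [Prod.fst_sum] at this
    refine this.symm.trans ?_
    refine Finset.sum_congr rfl fun i _ => ?_
    rw [← hψz]; rfl
  · rw [Equiv.sum_comp e (fun i => w i * (1 - I5 dA dB dC (ψ i)) ^ ((2 : ℝ) / 3))]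
    have := congrArg Prod.snd hx
    rw [Prod.snd_sum] at this
    refine this.symm.trans ?_
    refine Finset.sum_congr rfl fun i _ => ?_
    rw [← hψz]; rfl

theorem aux_nonempty (dA dB dC : ℕ)
    (ρ : Matrix (Fin dA × Fin dB × Fin dC) (Fin dA × Fin dB × Fin dC) ℂ)
    (hρ : ρ.PosSemidef) (htr : ρ.trace = 1) :
    ∃ x, (ρ, x) ∈ convexHull ℝ (auxG dA dB dC '' auxS _) := by
  classical
  have H := hρ.1
  have hm := aux_mem dA dB dC H.eigenvalues (fun i => ⇑(H.eigenvectorBasis i))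
    (fun i => hρ.eigenvalues_nonneg i) ?_ ?_
  · suffices hs : ρ = ∑ i, (H.eigenvalues i : ℂ) •
        Matrix.vecMulVec (H.eigenvectorBasis i).ofLp (star (H.eigenvectorBasis i).ofLp) by
      rw [← hs] at hm
      exact ⟨_, hm⟩
    conv_lhs => rw [H.spectral_theorem]
    ext a b
    rw [Unitary.conjStarAlgAut_apply, Matrix.mul_apply, Matrix.sum_apply]
    refine Finset.sum_congr rfl fun i _ => ?_
    simp [Matrix.mul_diagonal, Matrix.vecMulVec_apply, Matrix.star_apply]
    ring
  · have := H.trace_eq_sum_eigenvalues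
    rw [htr] at this
    have h2 := congrArg Complex.re this
    simpa using h2.symm
  · intro i
    have := H.eigenvectorBasis.orthonormal.1 i
    rw [EuclideanSpace.norm_eq, Real.sqrt_eq_one] at this
    exact this

theorem E1mI5_eq_zero_iff_fullySep
    (dA dB dC : ℕ) (hdA : 0 < dA) (hdB : 0 < dB) (hdC : 0 < dC)
    (ρ : Matrix (Fin dA × Fin dB × Fin dC) (Fin dA × Fin dB × Fin dC) ℂ)
    (hρ : ρ.PosSemidef) (htr : ρ.trace = 1) :
    E1mI5 dA dB dC ρ = 0 ↔ FullySep dA dB dC ρ := by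
  have hnn : ∀ (ψ : Fin dA × Fin dB × Fin dC → ℂ), ∑ v, ‖ψ v‖ ^ 2 = 1 →
      0 ≤ (1 - I5 dA dB dC ψ) ^ ((2 : ℝ) / 3) :=
    fun ψ h => Real.rpow_nonneg (aux_I5_le dA dB dC ψ h) _
  constructor
  · intro hE
    have hclosed : IsClosed (convexHull ℝ (auxG dA dB dC '' auxS _)) :=
      (aux_compact_convexHull ((aux_compact_S _).image (aux_cont dA dB dC))).isClosed
    have h0 : (ρ, (0 : ℝ)) ∈ convexHull ℝ (auxG dA dB dC '' auxS _) := by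
      have hc : IsClosed {x : ℝ | (ρ, x) ∈ convexHull ℝ (auxG dA dB dC '' auxS _)} :=
        hclosed.preimage (by fun_prop)
      have hset : {x : ℝ | (ρ, x) ∈ convexHull ℝ (auxG dA dB dC '' auxS _)} =
          {x : ℝ | ∃ (m : ℕ) (p : Fin m → ℝ) (ψ : Fin m → Fin dA × Fin dB × Fin dC → ℂ),
            (∀ ℓ, 0 < p ℓ) ∧ (∑ ℓ, p ℓ = 1) ∧
            (∀ ℓ, ∑ v : Fin dA × Fin dB × Fin dC, ‖ψ ℓ v‖ ^ 2 = 1) ∧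
            ρ = ∑ ℓ, (p ℓ : ℂ) • Matrix.vecMulVec (ψ ℓ) (star (ψ ℓ)) ∧
            x = ∑ ℓ, p ℓ * (1 - I5 dA dB dC (ψ ℓ)) ^ ((2 : ℝ) / 3)} := by
        refine Set.Subset.antisymm (fun x hx => aux_of_mem dA dB dC ρ x hx) ?_
        rintro x ⟨m, p, ψ, hp, hp1, hψ, rfl, rfl⟩
        exact aux_mem dA dB dC p ψ (fun i => (hp i).le) hp1 hψ
      obtain ⟨x, hx⟩ := aux_nonempty dA dB dC ρ hρ htr
      have hbdd : BddBelow {x : ℝ | (ρ, x) ∈ convexHull ℝ (auxG dA dB dC '' auxS _)} := by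
        refine ⟨0, fun y hy => ?_⟩
        obtain ⟨m, p, ψ, hp, hp1, hψ, -, rfl⟩ := aux_of_mem dA dB dC ρ y hy
        exact Finset.sum_nonneg fun i _ => mul_nonneg (hp i).le (hnn _ (hψ i))
      have := hc.csInf_mem ⟨x, hx⟩ hbdd
      unfold E1mI5 at hE
      rw [← hset] at hE
      rw [hE] at this
      exact this
    obtain ⟨m, p, ψ, hp, hp1, hψ, hr, hx⟩ := aux_of_mem dA dB dC ρ 0 h0
    have hz := (Finset.sum_eq_zero_iff_of_nonneg
      (fun i _ => mul_nonneg (hp i).le (hnn _ (hψ i)))).mp hx.symm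
    have hI : ∀ i, 1 - I5 dA dB dC (ψ i) = 0 := by
      intro i
      have h1 := (mul_eq_zero.mp (hz i (Finset.mem_univ i))).resolve_left (hp i).ne'
      exact ((Real.rpow_eq_zero_iff_of_nonneg (aux_I5_le dA dB dC _ (hψ i))).mp h1).1
    choose f g k hfgk using fun i => aux_prod_conv dA dB dC (ψ i) (hψ i) (hI i)
    refine ⟨m, p, f, g, k, fun i => (hp i).le, hp1, ?_, ?_⟩
    · intro i
      have := hψ i
      rw [hfgk i] at this
      exact this
    · rw [hr]
      refine Finset.sum_congr rfl fun i _ => ?_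
      rw [← hfgk i]
  · rintro ⟨m, p, f, g, k, hp, hp1, hn, hr⟩
    have hm := aux_mem dA dB dC p _ hp hp1 hn
    rw [← hr] at hm
    simp only [aux_prod dA dB dC _ _ _ (hn _)] at hm
    have h0 : ∑ i, p i * (0 : ℝ) ^ ((2 : ℝ) / 3) = 0 := by
      rw [Real.zero_rpow (by norm_num)]; simp
    rw [h0] at hm
    have hmem := aux_of_mem dA dB dC ρ 0 hm
    have hlb : ∀ y ∈ {x : ℝ | ∃ (m : ℕ) (p : Fin m → ℝ)
        (ψ : Fin m → Fin dA × Fin dB × Fin dC → ℂ),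
        (∀ ℓ, 0 < p ℓ) ∧ (∑ ℓ, p ℓ = 1) ∧
        (∀ ℓ, ∑ v : Fin dA × Fin dB × Fin dC, ‖ψ ℓ v‖ ^ 2 = 1) ∧
        ρ = ∑ ℓ, (p ℓ : ℂ) • Matrix.vecMulVec (ψ ℓ) (star (ψ ℓ)) ∧
        x = ∑ ℓ, p ℓ * (1 - I5 dA dB dC (ψ ℓ)) ^ ((2 : ℝ) / 3)}, 0 ≤ y := by
      rintro y ⟨m, p, ψ, hp, hp1, hψ, -, rfl⟩
      exact Finset.sum_nonneg fun i _ => mul_nonneg (hp i).le (hnn _ (hψ i))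
    exact (IsLeast.csInf_eq ⟨hmem, hlb⟩ : E1mI5 dA dB dC ρ = 0)

end
end

section
/- For every three-qubit pure state Ψ (unit vector in ℂ²⊗ℂ²⊗ℂ²), φ_ABC(Ψ) ≤ 99/2, and equality holds if and only if Ψ is LU-equivalent to the GHZ-state (|000⟩+|111⟩)/√2. -/
open scoped BigOperators Kronecker
open Matrix

noncomputable section

/-- `LUequiv Ψ Ψ'` : `Ψ' = (U_A ⊗ U_B ⊗ U_C) Ψ` for some `2×2` unitaries. -/
def LUequiv (Ψ Ψ' : Q3 → ℂ) : Prop :=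
  ∃ UA UB UC : Matrix (Fin 2) (Fin 2) ℂ,
    UA * UAᴴ = 1 ∧ UAᴴ * UA = 1 ∧
    UB * UBᴴ = 1 ∧ UBᴴ * UB = 1 ∧
    UC * UCᴴ = 1 ∧ UCᴴ * UC = 1 ∧
    ∀ v : Q3, Ψ' v = ∑ w : Q3, UA v.1 w.1 * UB v.2.1 w.2.1 * UC v.2.2 w.2.2 * Ψ w

/-- The three-qubit GHZ-state. -/
def GHZstate : Q3 → ℂ := fun v =>
  if v = (0, 0, 0) ∨ v = (1, 1, 1)
    then ((Real.sqrt 2 : ℝ) : ℂ)⁻¹ else 0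


namespace PhiAux

/-- The slice matrix `K` with `ρ_AB = K Kᴴ`. -/
def K (Ψ : Q3 → ℂ) : Matrix (Fin 2 × Fin 2) (Fin 2) ℂ := fun p c => Ψ (p.1, p.2, c)

def X (Ψ : Q3 → ℂ) : Matrix (Fin 2 × Fin 2) (Fin 2 × Fin 2) ℂ :=
  rhoA Ψ ⊗ₖ (1 : Matrix (Fin 2) (Fin 2) ℂ) + (1 : Matrix (Fin 2) (Fin 2) ℂ) ⊗ₖ rhoB Ψ

lemma rhoAB_eq (Ψ : Q3 → ℂ) : rhoAB Ψ = K Ψ * (K Ψ)ᴴ := by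
  ext p q
  simp [rhoAB, K, Matrix.mul_apply]

lemma rhoA_eq (Ψ : Q3 → ℂ) (a a' : Fin 2) : rhoA Ψ a a' = ∑ b, rhoAB Ψ (a, b) (a', b) := rfl

lemma rhoB_eq (Ψ : Q3 → ℂ) (b b' : Fin 2) : rhoB Ψ b b' = ∑ a, rhoAB Ψ (a, b) (a, b') := rfl

/-- Cubic expansion of the trace. -/
lemma trace_cube (R Y : Matrix (Fin 2 × Fin 2) (Fin 2 × Fin 2) ℂ) :
    (((2 : ℂ) • R + Y) ^ 3).trace = 8 * (R * R * R).trace + 12 * (R * R * Y).trace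
      + 6 * (R * (Y * Y)).trace + (Y * Y * Y).trace := by
  have h1 : (R * Y * R).trace = (R * R * Y).trace := by
    rw [Matrix.trace_mul_comm, ← mul_assoc]
  have h2 : (Y * R * R).trace = (R * R * Y).trace := by
    rw [mul_assoc, Matrix.trace_mul_comm]
  have h3 : (Y * R * Y).trace = (R * (Y * Y)).trace := by
    rw [mul_assoc, Matrix.trace_mul_comm, mul_assoc]
  have h4 : (Y * Y * R).trace = (R * (Y * Y)).trace := by
    rw [Matrix.trace_mul_comm]
  have h5 : (R * Y * Y).trace = (R * (Y * Y)).trace := by rw [mul_assoc]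
  have : ((2 : ℂ) • R + Y) ^ 3 = (8 : ℂ) • (R * R * R) + (4 : ℂ) • (R * R * Y)
      + (4 : ℂ) • (R * Y * R) + (4 : ℂ) • (Y * R * R) + (2 : ℂ) • (R * Y * Y)
      + (2 : ℂ) • (Y * R * Y) + (2 : ℂ) • (Y * Y * R) + Y * Y * Y := by
    rw [pow_succ, pow_two]
    simp only [add_mul, mul_add, smul_mul_assoc, mul_smul_comm, smul_smul, smul_add]
    norm_num
    abel
  rw [this]
  simp only [Matrix.trace_add, Matrix.trace_smul, smul_eq_mul, h1, h2, h3, h4, h5]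
  ring

/-- Algebraic identity for an arbitrary trace one `4 × 4` matrix. -/
lemma generic_identity (R : Matrix (Fin 2 × Fin 2) (Fin 2 × Fin 2) ℂ) (hR : R.trace = 1)
    (A B : Matrix (Fin 2) (Fin 2) ℂ) (hA : ∀ a a', A a a' = ∑ b, R (a, b) (a', b))
    (hB : ∀ b b', B b b' = ∑ a, R (a, b) (a, b')) (Y : Matrix (Fin 2 × Fin 2) (Fin 2 × Fin 2) ℂ)
    (hY : Y = A ⊗ₖ (1 : Matrix (Fin 2) (Fin 2) ℂ) + (1 : Matrix (Fin 2) (Fin 2) ℂ) ⊗ₖ B) :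
    12 * (R * R * Y).trace + 6 * (R * (Y * Y)).trace + (Y * Y * Y).trace
      = 12 * (R * R).trace + 10
        + 9 * (2 * (A * A).trace - 1) + 9 * (2 * (B * B).trace - 1)
        + 18 * (R * ((Y - 1) * (Y - 1))).trace := by
  subst hY
  simp only [Matrix.trace, Matrix.diag, Fintype.sum_prod_type, Fin.sum_univ_two] at hR
  have h3 : R (1, 1) (1, 1) = 1 - R (0, 0) (0, 0) - R (0, 1) (0, 1) - R (1, 0) (1, 0) := by
    linear_combination hR
  simp only [Matrix.trace, Matrix.diag, Matrix.mul_apply, Fintype.sum_prod_type, Fin.sum_univ_two,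
    Matrix.add_apply, Matrix.sub_apply, Matrix.kroneckerMap_apply, Matrix.one_apply, Prod.mk.injEq, hA, hB]
  simp only [Fin.isValue, zero_ne_one, one_ne_zero, and_true, and_false, if_true, if_false,
    mul_one, mul_zero, one_mul, zero_mul, add_zero, zero_add, and_self]
  rw [h3]
  ring

lemma trace_cube_two (D : Matrix (Fin 2) (Fin 2) ℂ) (h : D.trace = 1) :
    (D * D * D).trace = (3 * (D * D).trace - 1) / 2 := by
  have h1 : D 1 1 = 1 - D 0 0 := by
    simp [Matrix.trace, Fin.sum_univ_two] at h
    linear_combination h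
  simp only [Matrix.trace, Matrix.diag, Matrix.mul_apply, Fin.sum_univ_two, h1]
  ring

lemma trace_re_nonneg {m n : Type*} [Fintype m] [Fintype n] (H : Matrix m n ℂ) :
    0 ≤ (H * Hᴴ).trace.re := by
  simp only [Matrix.trace, Matrix.diag, Matrix.mul_apply, Matrix.conjTranspose_apply, Complex.re_sum]
  refine Finset.sum_nonneg fun i _ => Finset.sum_nonneg fun j _ => ?_
  simp [Complex.mul_re]
  nlinarith [mul_self_nonneg (H i j).re, mul_self_nonneg (H i j).im]

lemma eq_zero_of_trace_re {m n : Type*} [Fintype m] [Fintype n] (H : Matrix m n ℂ)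
    (h : (H * Hᴴ).trace.re = 0) : H = 0 := by
  have key : ∀ i j, 0 ≤ (H i j * star (H i j)).re := fun i j => by
    simp [Complex.mul_re]
    nlinarith [mul_self_nonneg (H i j).re, mul_self_nonneg (H i j).im]
  simp only [Matrix.trace, Matrix.diag, Matrix.mul_apply, Matrix.conjTranspose_apply,
    Complex.re_sum] at h
  rw [Finset.sum_eq_zero_iff_of_nonneg
    (fun i _ => Finset.sum_nonneg fun j _ => key i j)] at h
  ext i j
  have h2 := h i (Finset.mem_univ i)
  rw [Finset.sum_eq_zero_iff_of_nonneg (fun j _ => key i j)] at h2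
  have h3 := h2 j (Finset.mem_univ j)
  simp [Complex.mul_re] at h3
  apply Complex.ext
  · simp; nlinarith [mul_self_nonneg (H i j).re, mul_self_nonneg (H i j).im]
  · simp; nlinarith [mul_self_nonneg (H i j).re, mul_self_nonneg (H i j).im]

/-- `2 tr D² - 1` as a sum of squares. -/
lemma two_trace (D : Matrix (Fin 2) (Fin 2) ℂ) (hD : Dᴴ = D) (h : D.trace = 1) :
    2 * (D * D).trace - 1
      = 2 * ((D - (1 / 2 : ℂ) • 1) * (D - (1 / 2 : ℂ) • 1)ᴴ).trace := by
  have : (D - (1 / 2 : ℂ) • (1 : Matrix (Fin 2) (Fin 2) ℂ))ᴴ = D - (1 / 2 : ℂ) • 1 := by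
    rw [Matrix.conjTranspose_sub, hD, Matrix.conjTranspose_smul]
    simp
  rw [this]
  have h1 : D 1 1 = 1 - D 0 0 := by
    simp [Matrix.trace, Fin.sum_univ_two] at h
    linear_combination h
  simp [Matrix.trace, Matrix.mul_apply, Fin.sum_univ_two, h1, Matrix.one_apply]
  ring

lemma sum_eq (Ψ : Q3 → ℂ) (hΨ : ∑ v : Q3, ‖Ψ v‖ ^ 2 = 1) :
    ∑ v : Q3, Ψ v * (starRingEnd ℂ) (Ψ v) = 1 := by
  have : ((∑ v : Q3, ‖Ψ v‖ ^ 2 : ℝ) : ℂ) = 1 := by rw [hΨ]; simp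
  rw [← this]
  push_cast
  exact Finset.sum_congr rfl fun v _ => Complex.mul_conj' (Ψ v)

lemma trace_AB (Ψ : Q3 → ℂ) (hΨ : ∑ v : Q3, ‖Ψ v‖ ^ 2 = 1) : (rhoAB Ψ).trace = 1 := by
  rw [← sum_eq Ψ hΨ]
  simp [Matrix.trace, rhoAB, Fintype.sum_prod_type]

lemma trace_A (Ψ : Q3 → ℂ) (hΨ : ∑ v : Q3, ‖Ψ v‖ ^ 2 = 1) : (rhoA Ψ).trace = 1 := by
  rw [← sum_eq Ψ hΨ]
  simp [Matrix.trace, rhoA, Fintype.sum_prod_type]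

lemma trace_B (Ψ : Q3 → ℂ) (hΨ : ∑ v : Q3, ‖Ψ v‖ ^ 2 = 1) : (rhoB Ψ).trace = 1 := by
  rw [← sum_eq Ψ hΨ]
  simp [Matrix.trace, rhoB, Fintype.sum_prod_type]
  ring

lemma trace_C (Ψ : Q3 → ℂ) (hΨ : ∑ v : Q3, ‖Ψ v‖ ^ 2 = 1) :
    ((K Ψ)ᴴ * K Ψ).trace = 1 := by
  rw [Matrix.trace_mul_comm, ← rhoAB_eq, trace_AB Ψ hΨ]

lemma herm_A (Ψ : Q3 → ℂ) : (rhoA Ψ)ᴴ = rhoA Ψ := by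
  ext i j
  simp [rhoA, Matrix.conjTranspose_apply, mul_comm]

lemma herm_B (Ψ : Q3 → ℂ) : (rhoB Ψ)ᴴ = rhoB Ψ := by
  ext i j
  simp [rhoB, Matrix.conjTranspose_apply, mul_comm]

lemma herm_X (Ψ : Q3 → ℂ) : (X Ψ - 1)ᴴ = X Ψ - 1 := by
  simp [X, Matrix.conjTranspose_kronecker, herm_A, herm_B]

/-- The main identity: `φ` is `99/2` minus a sum of squares. -/
lemma phi_eq (Ψ : Q3 → ℂ) (hΨ : ∑ v : Q3, ‖Ψ v‖ ^ 2 = 1) :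
    phiABC Ψ = 99 / 2
      - 27 * (((K Ψ)ᴴ * K Ψ - (1 / 2 : ℂ) • 1) * ((K Ψ)ᴴ * K Ψ - (1 / 2 : ℂ) • 1)ᴴ).trace.re
      - 18 * ((rhoA Ψ - (1 / 2 : ℂ) • 1) * (rhoA Ψ - (1 / 2 : ℂ) • 1)ᴴ).trace.re
      - 18 * ((rhoB Ψ - (1 / 2 : ℂ) • 1) * (rhoB Ψ - (1 / 2 : ℂ) • 1)ᴴ).trace.re
      - 18 * (((X Ψ - 1) * K Ψ) * ((X Ψ - 1) * K Ψ)ᴴ).trace.re := by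
  have hg := generic_identity (rhoAB Ψ) (trace_AB Ψ hΨ) (rhoA Ψ) (rhoB Ψ) (rhoA_eq Ψ) (rhoB_eq Ψ)
    (X Ψ) rfl
  have h3 := trace_cube_two _ (trace_C Ψ hΨ)
  have e3 : (rhoAB Ψ * rhoAB Ψ * rhoAB Ψ).trace
      = ((K Ψ)ᴴ * K Ψ * ((K Ψ)ᴴ * K Ψ) * ((K Ψ)ᴴ * K Ψ)).trace := by
    rw [rhoAB_eq]
    simp only [Matrix.mul_assoc]
    rw [Matrix.trace_mul_comm]
    simp only [Matrix.mul_assoc]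
  have e2 : (rhoAB Ψ * rhoAB Ψ).trace = ((K Ψ)ᴴ * K Ψ * ((K Ψ)ᴴ * K Ψ)).trace := by
    rw [rhoAB_eq]
    simp only [Matrix.mul_assoc]
    rw [Matrix.trace_mul_comm]
    simp only [Matrix.mul_assoc]
  have eX : (rhoAB Ψ * ((X Ψ - 1) * (X Ψ - 1))).trace
      = (((X Ψ - 1) * K Ψ) * ((X Ψ - 1) * K Ψ)ᴴ).trace := by
    rw [Matrix.conjTranspose_mul, herm_X, rhoAB_eq, ← Matrix.mul_assoc, Matrix.trace_mul_comm]
    simp only [Matrix.mul_assoc]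
  have hC := two_trace ((K Ψ)ᴴ * K Ψ) (by simp) (trace_C Ψ hΨ)
  have hA := two_trace _ (herm_A Ψ) (trace_A Ψ hΨ)
  have hB := two_trace _ (herm_B Ψ) (trace_B Ψ hΨ)
  have hc := trace_cube (rhoAB Ψ) (X Ψ)
  rw [phiABC, add_assoc, ← X, hc, pow_two]
  rw [eX] at hg
  rw [e3, h3]
  rw [e2] at hg ⊢
  set c := ((K Ψ)ᴴ * K Ψ * ((K Ψ)ᴴ * K Ψ)).trace
  have hh := congrArg Complex.re (show 8 * ((3 * c - 1) / 2) + 12 * (rhoAB Ψ * rhoAB Ψ * X Ψ).trace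
      + 6 * (rhoAB Ψ * (X Ψ * X Ψ)).trace + (X Ψ * X Ψ * X Ψ).trace + 3 * c = ((39 / 2 : ℝ) : ℂ) +
      ((27 : ℝ) : ℂ) * (((K Ψ)ᴴ * K Ψ - (1 / 2 : ℂ) • 1) * ((K Ψ)ᴴ * K Ψ - (1 / 2 : ℂ) • 1)ᴴ).trace
      + ((18 : ℝ) : ℂ) * ((rhoA Ψ - (1 / 2 : ℂ) • 1) * (rhoA Ψ - (1 / 2 : ℂ) • 1)ᴴ).trace
      + ((18 : ℝ) : ℂ) * ((rhoB Ψ - (1 / 2 : ℂ) • 1) * (rhoB Ψ - (1 / 2 : ℂ) • 1)ᴴ).trace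
      + ((18 : ℝ) : ℂ) * (((X Ψ - 1) * K Ψ) * ((X Ψ - 1) * K Ψ)ᴴ).trace by
    push_cast
    linear_combination hg + 9 * hA + 9 * hB + (27 / 2) * hC)
  have h33 : (3 * c).re = 3 * c.re := by simp
  simp only [Complex.add_re _ (3 * c), h33] at hh
  simp only [Complex.add_re, Complex.re_ofReal_mul, Complex.ofReal_re] at hh ⊢
  linarith

/-- A `2 × 2` matrix of determinant zero and Frobenius norm one is a product of unit vectors. -/
lemma rank_one (p q r s : ℂ) (hdet : p * s - q * r = 0)
    (hn : ‖p‖ ^ 2 + ‖q‖ ^ 2 + ‖r‖ ^ 2 + ‖s‖ ^ 2 = 1) :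
    ∃ x0 x1 y0 y1 : ℂ, p = x0 * y0 ∧ q = x0 * y1 ∧ r = x1 * y0 ∧ s = x1 * y1 ∧
      ‖x0‖ ^ 2 + ‖x1‖ ^ 2 = 1 ∧ ‖y0‖ ^ 2 + ‖y1‖ ^ 2 = 1 := by
  have step : ∃ x0 x1 y0 y1 : ℂ, p = x0 * y0 ∧ q = x0 * y1 ∧ r = x1 * y0 ∧ s = x1 * y1 := by
    by_cases hp : p = 0
    · by_cases hq : q = 0
      · exact ⟨0, 1, r, s, by simp [hp], by simp [hq], by simp, by simp⟩
      · refine ⟨1, s / q, p, q, by simp, by simp, ?_, ?_⟩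
        · field_simp
          linear_combination -hdet
        · field_simp
    · refine ⟨1, r / p, p, q, by simp, by simp, ?_, ?_⟩
      · field_simp
      · field_simp
        linear_combination hdet
  obtain ⟨x0, x1, y0, y1, rfl, rfl, rfl, rfl⟩ := step
  simp only [norm_mul, mul_pow] at hn
  have hn' : (‖x0‖ ^ 2 + ‖x1‖ ^ 2) * (‖y0‖ ^ 2 + ‖y1‖ ^ 2) = 1 := by linarith
  set t := Real.sqrt (‖x0‖ ^ 2 + ‖x1‖ ^ 2) with ht
  have ht2 : t ^ 2 = ‖x0‖ ^ 2 + ‖x1‖ ^ 2 := Real.sq_sqrt (by positivity)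
  have ht0 : t ≠ 0 := by
    intro h
    rw [← ht2, h] at hn'
    simp at hn'
  have htc : (t : ℂ) ≠ 0 := by exact_mod_cast ht0
  refine ⟨x0 / t, x1 / t, t * y0, t * y1, ?_, ?_, ?_, ?_, ?_, ?_⟩
  · field_simp
  · field_simp
  · field_simp
  · field_simp
  · simp only [norm_div, Complex.norm_real, Real.norm_eq_abs, div_pow, sq_abs]
    rw [← add_div, ← ht2, div_self (pow_ne_zero 2 ht0)]
  · simp only [norm_mul, Complex.norm_real, Real.norm_eq_abs, mul_pow, sq_abs]
    rw [← mul_add, ht2, hn']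

/-- A binary quadratic form has an isotropic unit vector. -/
lemma exists_isotropic (α β γ : ℂ) :
    ∃ u v : ℂ, ‖u‖ ^ 2 + ‖v‖ ^ 2 = 1 ∧ α * u ^ 2 + β * (u * v) + γ * v ^ 2 = 0 := by
  by_cases hα : α = 0
  · exact ⟨1, 0, by simp, by simp [hα]⟩
  · obtain ⟨d, hd⟩ := IsAlgClosed.exists_pow_nat_eq (discrim α β γ) (n := 2) (by norm_num)
    obtain ⟨x, hx⟩ := exists_quadratic_eq_zero hα ⟨d, by rw [← hd, pow_two]⟩
    set t := Real.sqrt (‖x‖ ^ 2 + 1) with ht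
    have ht2 : t ^ 2 = ‖x‖ ^ 2 + 1 := Real.sq_sqrt (by positivity)
    have ht0 : t ≠ 0 := by
      intro h
      rw [h] at ht2
      nlinarith [sq_nonneg ‖x‖]
    have htc : (t : ℂ) ≠ 0 := by exact_mod_cast ht0
    refine ⟨x / t, 1 / t, ?_, ?_⟩
    · simp only [norm_div, Complex.norm_real, Real.norm_eq_abs, div_pow, sq_abs, norm_one, one_pow]
      rw [← add_div, ← ht2, div_self (pow_ne_zero 2 ht0)]
    · field_simp
      linear_combination hx

/-- Marginals of a state with GHZ-type Schmidt decomposition. -/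
lemma marginal (U V W : Matrix (Fin 2) (Fin 2) ℂ) (hU : U * Uᴴ = 1) (hV : Vᴴ * V = 1)
    (hW : Wᴴ * W = 1) (a a' : Fin 2) :
    ∑ b, ∑ c, (U a 0 * V b 0 * W c 0 + U a 1 * V b 1 * W c 1) *
      (starRingEnd ℂ) (U a' 0 * V b 0 * W c 0 + U a' 1 * V b 1 * W c 1)
      = (1 : Matrix (Fin 2) (Fin 2) ℂ) a a' := by
  have hu := congrFun (congrFun hU a) a'
  have hv := fun i j => congrFun (congrFun hV i) j
  have hw := fun i j => congrFun (congrFun hW i) j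
  simp only [Matrix.mul_apply, Fin.sum_univ_two, Matrix.conjTranspose_apply] at hu hv hw
  have key : ∑ b, ∑ c, (U a 0 * V b 0 * W c 0 + U a 1 * V b 1 * W c 1) *
      (starRingEnd ℂ) (U a' 0 * V b 0 * W c 0 + U a' 1 * V b 1 * W c 1)
      = ∑ i, ∑ j, U a i * star (U a' j) * (star (V 0 j) * V 0 i + star (V 1 j) * V 1 i)
        * (star (W 0 j) * W 0 i + star (W 1 j) * W 1 i) := by
    simp only [Fin.sum_univ_two, map_add, map_mul, starRingEnd_apply]
    ring
  rw [key]
  simp only [hv, hw, ← hu, Fin.sum_univ_two, Matrix.one_apply]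
  simp


lemma core2 (P Q : Matrix (Fin 2) (Fin 2) ℂ) (hdet : P.det = 0) (ht : (P * Pᴴ).trace = 1)
    (hB : P * Pᴴ + Q * Qᴴ = 1) (hC : Pᴴ * P + Qᴴ * Q = 1) :
    ∃ UB UC : Matrix (Fin 2) (Fin 2) ℂ, UB * UBᴴ = 1 ∧ UC * UCᴴ = 1 ∧
      (∀ b c, P b c = UB b 0 * UC c 0) ∧ (∀ b c, Q b c = UB b 1 * UC c 1) := by
  have norm_of : ∀ M : Matrix (Fin 2) (Fin 2) ℂ, (M * Mᴴ).trace = 1 →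
      ‖M 0 0‖ ^ 2 + ‖M 0 1‖ ^ 2 + ‖M 1 0‖ ^ 2 + ‖M 1 1‖ ^ 2 = 1 := by
    intro M hM
    simp only [Matrix.trace, Matrix.diag, Matrix.mul_apply, Fin.sum_univ_two,
      Matrix.conjTranspose_apply, ← starRingEnd_apply, Complex.mul_conj'] at hM
    have : ((‖M 0 0‖ ^ 2 + ‖M 0 1‖ ^ 2 + ‖M 1 0‖ ^ 2 + ‖M 1 1‖ ^ 2 : ℝ) : ℂ) = 1 := by
      push_cast
      linear_combination hM
    exact_mod_cast this
  have cnorm : ∀ x0 x1 : ℂ, ‖x0‖ ^ 2 + ‖x1‖ ^ 2 = 1 → x0 * star x0 + x1 * star x1 = 1 := by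
    intro x0 x1 h
    rw [← starRingEnd_apply, ← starRingEnd_apply, Complex.mul_conj', Complex.mul_conj']
    exact_mod_cast h
  rw [Matrix.det_fin_two] at hdet
  obtain ⟨x0, x1, y0, y1, e00, e01, e10, e11, hx, hy⟩ := rank_one _ _ _ _ hdet (norm_of P ht)
  have hx' := cnorm _ _ hx
  have hy' := cnorm _ _ hy
  have hP : ∀ b c, P b c = ![x0, x1] b * ![y0, y1] c := by
    intro b c
    fin_cases b <;> fin_cases c <;> simpa
  have hPP : ∀ b b', (P * Pᴴ) b b' = ![x0, x1] b * star (![x0, x1] b') := by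
    intro b b'
    simp only [Matrix.mul_apply, Matrix.conjTranspose_apply, Fin.sum_univ_two, hP, star_mul',
      Matrix.cons_val_zero, Matrix.cons_val_one]
    linear_combination (![x0, x1] b * star (![x0, x1] b')) * hy'
  have hPP2 : ∀ b b', (Pᴴ * P) b b' = star (![y0, y1] b) * ![y0, y1] b' := by
    intro b b'
    simp only [Matrix.mul_apply, Matrix.conjTranspose_apply, Fin.sum_univ_two, hP, star_mul',
      Matrix.cons_val_zero, Matrix.cons_val_one]
    linear_combination (star (![y0, y1] b) * ![y0, y1] b') * hx'
  have hQQ : Q * Qᴴ = 1 - P * Pᴴ := by rw [← hB]; abel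
  have hdQ : Q.det = 0 := by
    have h1 : (Q * Qᴴ).det = 0 := by
      rw [hQQ, Matrix.det_fin_two]
      simp only [Matrix.sub_apply, hPP]
      simp
      simp only [← starRingEnd_apply] at hx'
      linear_combination -hx'
    rw [Matrix.det_mul, Matrix.det_conjTranspose] at h1
    rcases mul_eq_zero.mp h1 with h | h
    · exact h
    · simpa using h
  have htQ : (Q * Qᴴ).trace = 1 := by
    rw [hQQ, Matrix.trace_sub, ht]
    simp
    norm_num
  rw [Matrix.det_fin_two] at hdQ
  obtain ⟨z0, z1, w0, w1, f00, f01, f10, f11, hz, hw⟩ := rank_one _ _ _ _ hdQ (norm_of Q htQ)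
  have hz' := cnorm _ _ hz
  have hw' := cnorm _ _ hw
  have hQ : ∀ b c, Q b c = ![z0, z1] b * ![w0, w1] c := by
    intro b c
    fin_cases b <;> fin_cases c <;> simpa
  have hQQ1 : ∀ b b', (Q * Qᴴ) b b' = ![z0, z1] b * star (![z0, z1] b') := by
    intro b b'
    simp only [Matrix.mul_apply, Matrix.conjTranspose_apply, Fin.sum_univ_two, hQ, star_mul',
      Matrix.cons_val_zero, Matrix.cons_val_one]
    linear_combination (![z0, z1] b * star (![z0, z1] b')) * hw'
  have hQQ2 : ∀ b b', (Qᴴ * Q) b b' = star (![w0, w1] b) * ![w0, w1] b' := by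
    intro b b'
    simp only [Matrix.mul_apply, Matrix.conjTranspose_apply, Fin.sum_univ_two, hQ, star_mul',
      Matrix.cons_val_zero, Matrix.cons_val_one]
    linear_combination (star (![w0, w1] b) * ![w0, w1] b') * hz'
  refine ⟨Matrix.of fun b i => ![![x0, x1] b, ![z0, z1] b] i,
    Matrix.of fun b i => ![![y0, y1] b, ![w0, w1] b] i,
    ?_, ?_, ?_, ?_⟩
  · rw [← hB]
    ext b b'
    rw [Matrix.add_apply, hPP, hQQ1]
    simp [Matrix.mul_apply, Fin.sum_univ_two]
  · ext b b'
    have h := congrFun (congrFun hC b') b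
    rw [Matrix.add_apply, hPP2, hQQ2] at h
    rw [Matrix.one_apply] at h ⊢
    simp only [eq_comm (a := b') (b := b)] at h
    rw [← h]
    simp only [Matrix.mul_apply, Fin.sum_univ_two, Matrix.conjTranspose_apply,
      Matrix.of_apply, Matrix.cons_val_zero, Matrix.cons_val_one]
    ring
  · intro b c
    rw [hP]
    simp
  · intro b c
    rw [hQ]
    simp

lemma core (m0 m1 : Matrix (Fin 2) (Fin 2) ℂ) (h00 : (m0 * m0ᴴ).trace = 1)
    (h01 : (m0 * m1ᴴ).trace = 0) (h10 : (m1 * m0ᴴ).trace = 0) (h11 : (m1 * m1ᴴ).trace = 1)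
    (hB : m0 * m0ᴴ + m1 * m1ᴴ = 1) (hC : m0ᴴ * m0 + m1ᴴ * m1 = 1) :
    ∃ UA UB UC : Matrix (Fin 2) (Fin 2) ℂ, UA * UAᴴ = 1 ∧ UB * UBᴴ = 1 ∧ UC * UCᴴ = 1 ∧
      (∀ b c, m0 b c = UA 0 0 * UB b 0 * UC c 0 + UA 0 1 * UB b 1 * UC c 1) ∧
      (∀ b c, m1 b c = UA 1 0 * UB b 0 * UC c 0 + UA 1 1 * UB b 1 * UC c 1) := by
  obtain ⟨u, v, huv, hq⟩ := exists_isotropic m0.det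
    (m0 0 0 * m1 1 1 + m1 0 0 * m0 1 1 - m0 0 1 * m1 1 0 - m1 0 1 * m0 1 0) m1.det
  have huv' : u * star u + v * star v = 1 := by
    rw [← starRingEnd_apply, ← starRingEnd_apply, Complex.mul_conj', Complex.mul_conj']
    exact_mod_cast huv
  obtain ⟨UB, UC, hUB, hUC, hP, hQ⟩ := core2 (u • m0 + v • m1) (-star v • m0 + star u • m1)
    (by
      rw [Matrix.det_fin_two] at hq ⊢
      rw [Matrix.det_fin_two] at hq
      simp only [Matrix.add_apply, Matrix.smul_apply, smul_eq_mul]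
      linear_combination hq)
    (by
      simp only [Matrix.conjTranspose_add, Matrix.conjTranspose_smul, mul_add, add_mul,
        smul_mul_assoc, mul_smul_comm, Matrix.trace_add, Matrix.trace_smul, smul_eq_mul,
        h00, h01, h10, h11]
      linear_combination huv')
    (by
      ext b c
      have h := congrFun (congrFun hB b) c
      simp only [Matrix.add_apply, Matrix.mul_apply, Matrix.conjTranspose_apply, Fin.sum_univ_two,
        Matrix.smul_apply, smul_eq_mul, star_add, star_mul', star_neg, star_star] at h ⊢
      linear_combination (u * star u + v * star v) * h
        + (1 : Matrix (Fin 2) (Fin 2) ℂ) b c * huv')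
    (by
      ext b c
      have h := congrFun (congrFun hC b) c
      simp only [Matrix.add_apply, Matrix.mul_apply, Matrix.conjTranspose_apply, Fin.sum_univ_two,
        Matrix.smul_apply, smul_eq_mul, star_add, star_mul', star_neg, star_star] at h ⊢
      linear_combination (u * star u + v * star v) * h
        + (1 : Matrix (Fin 2) (Fin 2) ℂ) b c * huv')
  refine ⟨!![star u, -v; star v, u], UB, UC, ?_, hUB, hUC, ?_, ?_⟩
  · ext i j
    simp only [← starRingEnd_apply] at huv'
    fin_cases i <;> fin_cases j <;> simp [Matrix.mul_apply, Fin.sum_univ_two]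
    · linear_combination huv'
    · ring
    · ring
    · linear_combination huv'
  · intro b c
    have h1 := hP b c
    have h2 := hQ b c
    simp only [Matrix.add_apply, Matrix.smul_apply, smul_eq_mul] at h1 h2
    simp only [Matrix.of_apply, Matrix.cons_val_zero, Matrix.cons_val_one]
    linear_combination star u * h1 - v * h2 - m0 b c * huv'
  · intro b c
    have h1 := hP b c
    have h2 := hQ b c
    simp only [Matrix.add_apply, Matrix.smul_apply, smul_eq_mul] at h1 h2
    simp only [Matrix.of_apply, Matrix.cons_val_zero, Matrix.cons_val_one]
    linear_combination star v * h1 + u * h2 - m1 b c * huv'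

/-- The condition that all one-party marginals are maximally mixed. -/
def MaxMixed (Ψ : Q3 → ℂ) : Prop :=
  (K Ψ)ᴴ * K Ψ = (1 / 2 : ℂ) • 1 ∧ rhoA Ψ = (1 / 2 : ℂ) • 1 ∧ rhoB Ψ = (1 / 2 : ℂ) • 1

lemma sqrt_two_sq : ((Real.sqrt 2 : ℝ) : ℂ) * ((Real.sqrt 2 : ℝ) : ℂ) = 2 := by
  rw [← Complex.ofReal_mul, Real.mul_self_sqrt (by norm_num)]
  simp

lemma sqrt_two_ne : ((Real.sqrt 2 : ℝ) : ℂ) ≠ 0 := by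
  intro h
  have := sqrt_two_sq
  rw [h] at this
  norm_num at this

lemma sum_GHZ (UA UB UC : Matrix (Fin 2) (Fin 2) ℂ) (v : Q3) :
    ∑ w : Q3, UA v.1 w.1 * UB v.2.1 w.2.1 * UC v.2.2 w.2.2 * GHZstate w
      = ((Real.sqrt 2 : ℝ) : ℂ)⁻¹ * (UA v.1 0 * UB v.2.1 0 * UC v.2.2 0
        + UA v.1 1 * UB v.2.1 1 * UC v.2.2 1) := by
  simp [Fintype.sum_prod_type, GHZstate]
  ring

lemma LU_of_maxMixed (Ψ : Q3 → ℂ) (h : MaxMixed Ψ) : LUequiv GHZstate Ψ := by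
  obtain ⟨hC, hA, hB⟩ := h
  set s := ((Real.sqrt 2 : ℝ) : ℂ) with hs
  have hss : s * star s = 2 := by
    rw [← starRingEnd_apply, hs, Complex.conj_ofReal, sqrt_two_sq]
  have a := fun i j => congrFun (congrFun hA i) j
  have b := fun i j => congrFun (congrFun hB i) j
  have c := fun i j => congrFun (congrFun hC i) j
  simp only [rhoA, rhoB, K, Matrix.mul_apply, Matrix.conjTranspose_apply, Fintype.sum_prod_type,
    Fin.sum_univ_two, Matrix.smul_apply, smul_eq_mul, starRingEnd_apply] at a b c
  obtain ⟨UA, UB, UC, hUA, hUB, hUC, h0, h1⟩ := core (Matrix.of fun b c => s * Ψ (0, b, c))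
    (Matrix.of fun b c => s * Ψ (1, b, c))
    (by
      have := a 0 0
      simp only [Matrix.one_apply_eq] at this
      simp only [Matrix.trace, Matrix.diag, Matrix.mul_apply, Matrix.conjTranspose_apply,
        Fin.sum_univ_two, star_mul', Matrix.of_apply]
      linear_combination (s * star s) * this + 1 / 2 * hss)
    (by
      have := a 0 1
      simp only [Matrix.one_apply_ne zero_ne_one] at this
      simp only [Matrix.trace, Matrix.diag, Matrix.mul_apply, Matrix.conjTranspose_apply,
        Fin.sum_univ_two, star_mul', Matrix.of_apply]
      linear_combination (s * star s) * this)
    (by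
      have := a 1 0
      simp only [Matrix.one_apply_ne one_ne_zero] at this
      simp only [Matrix.trace, Matrix.diag, Matrix.mul_apply, Matrix.conjTranspose_apply,
        Fin.sum_univ_two, star_mul', Matrix.of_apply]
      linear_combination (s * star s) * this)
    (by
      have := a 1 1
      simp only [Matrix.one_apply_eq] at this
      simp only [Matrix.trace, Matrix.diag, Matrix.mul_apply, Matrix.conjTranspose_apply,
        Fin.sum_univ_two, star_mul', Matrix.of_apply]
      linear_combination (s * star s) * this + 1 / 2 * hss)
    (by
      ext i j
      have := b i j
      simp only [Matrix.add_apply, Matrix.mul_apply, Matrix.conjTranspose_apply,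
        Fin.sum_univ_two, star_mul', Matrix.of_apply]
      linear_combination (s * star s) * this
        + (1 / 2) * (1 : Matrix (Fin 2) (Fin 2) ℂ) i j * hss)
    (by
      ext i j
      have := c i j
      simp only [Matrix.add_apply, Matrix.mul_apply, Matrix.conjTranspose_apply,
        Fin.sum_univ_two, star_mul', Matrix.of_apply]
      linear_combination (s * star s) * this
        + (1 / 2) * (1 : Matrix (Fin 2) (Fin 2) ℂ) i j * hss)
  refine ⟨UA, UB, UC, hUA, mul_eq_one_comm.mp hUA, hUB, mul_eq_one_comm.mp hUB, hUC,
    mul_eq_one_comm.mp hUC, ?_⟩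
  rintro ⟨i, j, k⟩
  rw [sum_GHZ, ← hs, eq_inv_mul_iff_mul_eq₀ sqrt_two_ne]
  fin_cases i
  · exact h0 j k
  · exact h1 j k

lemma maxMixed_of_LU (Ψ : Q3 → ℂ) (h : LUequiv GHZstate Ψ) : MaxMixed Ψ := by
  obtain ⟨UA, UB, UC, a1, a2, b1, b2, c1, c2, h⟩ := h
  set s := ((Real.sqrt 2 : ℝ) : ℂ)⁻¹ with hs
  have hss : s * (starRingEnd ℂ) s = 1 / 2 := by
    rw [hs, map_inv₀, Complex.conj_ofReal, ← mul_inv, sqrt_two_sq]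
    norm_num
  have hΨ : ∀ i j k, Ψ (i, j, k) = s * (UA i 0 * UB j 0 * UC k 0 + UA i 1 * UB j 1 * UC k 1) :=
    fun i j k => by rw [h, sum_GHZ]
  refine ⟨?_, ?_, ?_⟩
  · ext i j
    have hm := marginal UC UA UB c1 a2 b2 j i
    have hsym : (1 : Matrix (Fin 2) (Fin 2) ℂ) i j = (1 : Matrix (Fin 2) (Fin 2) ℂ) j i := by
      simp only [Matrix.one_apply, eq_comm]
    rw [Matrix.smul_apply, hsym, ← hm]
    simp only [K, Matrix.mul_apply, Matrix.conjTranspose_apply, Fintype.sum_prod_type,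
      Fin.sum_univ_two, hΨ, smul_eq_mul, ← starRingEnd_apply, map_add, map_mul, ← hss]
    ring
  · ext i j
    have hm := marginal UA UB UC a1 b2 c2 i j
    rw [Matrix.smul_apply, ← hm]
    simp only [rhoA, Fin.sum_univ_two, hΨ, smul_eq_mul, map_add, map_mul, ← hss]
    ring
  · ext i j
    have hm := marginal UB UA UC b1 a2 c2 i j
    rw [Matrix.smul_apply, ← hm]
    simp only [rhoB, Fin.sum_univ_two, hΨ, smul_eq_mul, map_add, map_mul, ← hss]
    ring

end PhiAux

theorem phiABC_upper_bound
    (Ψ : Q3 → ℂ) (hΨ : ∑ v : Q3, ‖Ψ v‖ ^ 2 = 1) :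
    phiABC Ψ ≤ 99 / 2 ∧ (phiABC Ψ = 99 / 2 ↔ LUequiv GHZstate Ψ) := by
  have key := PhiAux.phi_eq Ψ hΨ
  have n1 := PhiAux.trace_re_nonneg ((PhiAux.K Ψ)ᴴ * PhiAux.K Ψ - (1 / 2 : ℂ) • 1)
  have n2 := PhiAux.trace_re_nonneg (rhoA Ψ - (1 / 2 : ℂ) • 1)
  have n3 := PhiAux.trace_re_nonneg (rhoB Ψ - (1 / 2 : ℂ) • 1)
  have n4 := PhiAux.trace_re_nonneg ((PhiAux.X Ψ - 1) * PhiAux.K Ψ)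
  refine ⟨by linarith, fun h => ?_, fun h => ?_⟩
  · apply PhiAux.LU_of_maxMixed
    exact ⟨sub_eq_zero.mp (PhiAux.eq_zero_of_trace_re _ (by linarith)),
      sub_eq_zero.mp (PhiAux.eq_zero_of_trace_re _ (by linarith)),
      sub_eq_zero.mp (PhiAux.eq_zero_of_trace_re _ (by linarith))⟩
  · obtain ⟨hC, hA, hB⟩ := PhiAux.maxMixed_of_LU Ψ h
    have hX : PhiAux.X Ψ - 1 = 0 := by
      rw [PhiAux.X, hA, hB, Matrix.smul_kronecker, Matrix.kronecker_smul, Matrix.one_kronecker_one,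
        ← add_smul]
      norm_num
    rw [key, hX, hC, hA, hB]
    simp

end
end
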